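/- Let r ≥ 1 and let p ∈ E_r satisfy: there exist constants σ > 0 and C > 0 such that for all x ∈ B_σ, Σ_{j∈I_{x,p}} λ_{p,j}(x) ≤ C (M_p(x) + |∇p(x)|²). Then there exist a radius σ' ∈ (0, σ] and a constant c₀ > 0 (depending on p) such that for every τ > 0 and every u ∈ C_c^∞(B_{σ'}; ℝ): ‖∇u‖²_{L²} + τ² ∫ |∇p(x)|² |u(x)|² dx ≤ c₀ ∫ |∇u(x) + τ u(x) ∇p(x)|² dx + c₀ ‖u‖²_{L²}. -/

import Mathlib

open MeasureTheory Filter Topology Metric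

noncomputable section

/-- Euclidean space ℝⁿ. -/
abbrev En (n : ℕ) := EuclideanSpace ℝ (Fin n)

/-- First-order partial derivative in direction `i`, as an endomorphism of functions. -/
noncomputable def pd1 (n : ℕ) (i : Fin n) : Function.End (En n → ℝ) :=
  fun f x => fderiv ℝ f x (EuclideanSpace.single i 1)

/-- Order `|α|` of a multi-index. -/
def mdeg {n : ℕ} (α : Fin n → ℕ) : ℕ := ∑ i, α i

/-- Iterated partial derivative `∂^α`. -/
noncomputable def pdm (n : ℕ) (α : Fin n → ℕ) (f : En n → ℝ) : En n → ℝ :=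
  ((List.ofFn fun i : Fin n => (pd1 n i) ^ (α i)).prod) f

/-- The finite set of multi-indices `lo ≤ |α| ≤ k`. -/
def midx (n k lo : ℕ) : Finset (Fin n → ℕ) :=
  (Finset.Iic fun _ => k).filter fun α => lo ≤ mdeg α ∧ mdeg α ≤ k

/-- `f̃(x) = Σ_{1≤|α|≤k} |∂^α V(x)|^{1/|α|}`. -/
noncomputable def ftil (n k : ℕ) (V : En n → ℝ) (x : En n) : ℝ :=
  ∑ α ∈ midx n k 1, |pdm n α V x| ^ ((1 : ℝ) / (mdeg α))

/-- `f̃_τ(x) = Σ_{1≤|α|≤k} τ^{1/|α|} |∂^α V(x)|^{1/|α|}`. -/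
noncomputable def ftilTau (n k : ℕ) (V : En n → ℝ) (τ : ℝ) (x : En n) : ℝ :=
  ∑ α ∈ midx n k 1, τ ^ ((1 : ℝ) / (mdeg α)) * |pdm n α V x| ^ ((1 : ℝ) / (mdeg α))

/-- Regularized weight `f(x) = Σ_{1≤|α|≤k} (1 + |∂^α V(x)|²)^{1/(2|α|)}`. -/
noncomputable def freg (n k : ℕ) (V : En n → ℝ) (x : En n) : ℝ :=
  ∑ α ∈ midx n k 1, (1 + |pdm n α V x| ^ 2) ^ ((1 : ℝ) / (2 * mdeg α))

/-- The Hessian matrix `(∂_i ∂_j ρ)(x)`. -/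
noncomputable def hessM (n : ℕ) (ρ : En n → ℝ) (x : En n) : Matrix (Fin n) (Fin n) ℝ :=
  fun i j => pd1 n i (pd1 n j ρ) x

/-- Eigenvalues of the Hessian matrix (with value 0 in the degenerate non-symmetric case). -/
noncomputable def hessEig (n : ℕ) (ρ : En n → ℝ) (x : En n) : Fin n → ℝ :=
  if h : (hessM n ρ x).IsHermitian then h.eigenvalues else 0

/-- `Σ_{j ∈ I_{x,ρ}} λ_{ρ,j}(x)`, the sum of the positive eigenvalues of the Hessian. -/
noncomputable def lamPos (n : ℕ) (ρ : En n → ℝ) (x : En n) : ℝ :=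
  ∑ j, max (hessEig n ρ x j) 0

/-- `M_ρ(x) = Σ_j max{−λ_{ρ,j}(x), 0}`. -/
noncomputable def lamNeg (n : ℕ) (ρ : En n → ℝ) (x : En n) : ℝ :=
  ∑ j, max (-(hessEig n ρ x j)) 0

/-- Assumption (i)–(iii) of the paper. -/
def AssumptionA (n k : ℕ) (V : En n → ℝ) : Prop :=
  (∃ C₀ > (1 : ℝ), ∃ δ₁ ∈ Set.Ioo (0 : ℝ) 1, ∀ x : En n,
      lamPos n V x ≤ C₀ * (lamNeg n V x + ‖gradient V x‖ ^ 2
        + (∑ α ∈ midx n k 2, |pdm n α V x| ^ ((2 - δ₁) / (mdeg α))) + 1)) ∧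
  (∃ δ₂ ∈ Set.Ioo (0 : ℝ) 1, ∀ α : Fin n → ℕ, mdeg α = k + 1 →
      ∃ Cα > (0 : ℝ), ∀ x : En n,
        |pdm n α V x| ≤ Cα * (1 + ftil n k V x) ^ ((k : ℝ) + 1 - δ₂)) ∧
  (∀ M : ℝ, ∃ R : ℝ, ∀ x : En n, R ≤ ‖x‖ → M ≤ ftil n k V x)

/-- The Witten-Laplacian quadratic form `Q_{τV}(u) = ∫ |∇u + τ u ∇V|²`. -/
noncomputable def Qform (n : ℕ) (V : En n → ℝ) (τ : ℝ) (u : En n → ℝ) : ℝ :=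
  ∫ x : En n, ‖gradient u x + (τ * u x) • gradient V x‖ ^ 2

/-- `u ∈ C_c^∞(ℝⁿ; ℝ)`. -/
def TestFun (n : ℕ) (u : En n → ℝ) : Prop :=
  ContDiff ℝ (⊤ : ℕ∞) u ∧ HasCompactSupport u

/-- `p` is (given by) a real polynomial of total degree at most `r`. -/
def IsPolyDeg (n r : ℕ) (p : En n → ℝ) : Prop :=
  ∃ P : MvPolynomial (Fin n) ℝ, P.totalDegree ≤ r ∧
    ∀ x : En n, p x = MvPolynomial.eval (fun i => x i) P

/-- `q ∈ L_{p,0}` (limiting polynomials of `p` at `0` of degree at most `r`). -/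
def memL (n r : ℕ) (p q : En n → ℝ) : Prop :=
  IsPolyDeg n r q ∧ q 0 = 0 ∧
  ∃ y : ℕ → En n, ∃ τ h : ℕ → ℝ,
    Tendsto y atTop (nhds 0) ∧ (∀ j, 0 < τ j) ∧ (∀ j, 0 < h j) ∧
    Tendsto τ atTop atTop ∧ Tendsto h atTop (nhds 0) ∧
    ∀ α : Fin n → ℕ, 1 ≤ mdeg α → mdeg α ≤ r →
      Tendsto (fun j => τ j * h j ^ (mdeg α) * pdm n α p (y j)) atTop
        (nhds (pdm n α q 0))

/-!
Write `Xu = ∇u + τ u ∇p`, so that `e^{τp} u` has gradient `e^{τp} Xu`. Let `ℓ(x)` be the largest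
radius on which `τ p` oscillates by at most `1` around `x`. Bernstein's inequality for polynomials
gives `τ |∇p| ≲ ℓ⁻¹` and makes `ℓ` vary by at most a power of `R` on balls of radius `R ℓ`. The
eigenvalue condition rules out approximate local minima of `p`, through a comparison with Gaussians,
so the ball of radius `R ℓ(x)` around `x` contains a comparable subball on which `τ p` lies below
`τ p(x)` by at least a constant times `R`. Integrating `d/dt (e^{τp} u)` along segments from `x`
to this subball bounds `(u / ℓ)²(x)` by an `e^{-cR}`-small multiple of its values there plus a mean
of `|Xu|²`. After integration in `x` the first term is absorbed once `R` is large, since all other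
losses are polynomial in `R`. This requires `R ℓ` to be small on the support of `u`, hence `τ` to
be large; bounded `τ` is covered by `‖u‖²`.
-/

section BallOsc

variable {E : Type*} [NormedAddCommGroup E] [NormedSpace ℝ E] {p : E → ℝ} {x y : E}
  {s t A : ℝ}

/-- The oscillation `max |p - p x|` of `p` over the closed ball of radius `s` around `x`. The ball
is parametrised by the unit ball, so that the dependence on `x` and `s` is visibly continuous. -/
def ballOsc (p : E → ℝ) (x : E) (s : ℝ) : ℝ :=
  ⨆ w : closedBall (0 : E) 1, |p (x + s • (w : E)) - p x|

lemma ballOsc_nonneg : 0 ≤ ballOsc p x s := Real.iSup_nonneg fun _ => abs_nonneg _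

lemma ballOsc_zero : ballOsc p x 0 = 0 := by simp [ballOsc]

lemma ballOsc_le (hs : 0 ≤ s) (hA : ∀ y ∈ closedBall x s, |p y - p x| ≤ A) :
    ballOsc p x s ≤ A := by
  have : Nonempty (closedBall (0 : E) 1) := ⟨0, by simp⟩
  refine ciSup_le fun w => hA _ ?_
  simpa [norm_smul, abs_of_nonneg hs] using
    mul_le_of_le_one_right hs (mem_closedBall_zero_iff.1 w.2)

variable [ProperSpace E]

lemma ballOsc_le_iff (hp : Continuous p) :
    ballOsc p x s ≤ A ↔ ∀ w : closedBall (0 : E) 1, |p (x + s • (w : E)) - p x| ≤ A := by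
  have : Nonempty (closedBall (0 : E) 1) := ⟨0, by simp⟩
  have : CompactSpace (closedBall (0 : E) 1) :=
    isCompact_iff_compactSpace.1 (isCompact_closedBall 0 1)
  exact ciSup_le_iff (isCompact_range (by fun_prop)).bddAbove

lemma isClosed_setOf_mul_ballOsc_le {X : Type*} [TopologicalSpace X] (hp : Continuous p)
    {f : X → E} {g : X → ℝ} (hf : Continuous f) (hg : Continuous g) (ht : 0 < t) :
    IsClosed {a | t * ballOsc p (f a) (g a) ≤ A} := by
  simp only [← le_div_iff₀' ht, ballOsc_le_iff hp, Set.ofPred_forall]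
  exact isClosed_iInter fun w => isClosed_le (by fun_prop) continuous_const

lemma abs_sub_le_ballOsc (hp : Continuous p) (hy : y ∈ closedBall x s) :
    |p y - p x| ≤ ballOsc p x s := by
  rcases (dist_nonneg.trans hy).eq_or_lt with rfl | hs
  · obtain rfl : y = x := by simpa using hy
    simpa using ballOsc_nonneg
  · have hw : s⁻¹ • (y - x) ∈ closedBall (0 : E) 1 := by
      rw [mem_closedBall_zero_iff, norm_smul, norm_inv, Real.norm_of_nonneg hs.le,
        inv_mul_le_one₀ hs, ← dist_eq_norm]
      exact hy
    simpa [smul_inv_smul₀ hs.ne'] using (ballOsc_le_iff (x := x) (s := s) hp).1 le_rfl ⟨_, hw⟩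

lemma exists_abs_sub_eq_ballOsc (hp : Continuous p) (hs : 0 ≤ s) :
    ∃ y ∈ closedBall x s, |p y - p x| = ballOsc p x s := by
  obtain ⟨y, hy, hmax⟩ := (isCompact_closedBall x s).exists_isMaxOn
    ⟨x, mem_closedBall_self hs⟩ (f := fun y => |p y - p x|) (by fun_prop)
  exact ⟨y, hy, (abs_sub_le_ballOsc hp hy).antisymm (ballOsc_le hs hmax)⟩

lemma ballOsc_mono (hp : Continuous p) (hs : 0 ≤ s) (hst : s ≤ t) :
    ballOsc p x s ≤ ballOsc p x t :=
  ballOsc_le hs fun _ hy => abs_sub_le_ballOsc hp (closedBall_subset_closedBall hst hy)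

lemma ballOsc_le_two_mul (hp : Continuous p) (hs : 0 ≤ s) (hst : s + dist y x ≤ t) :
    ballOsc p y s ≤ 2 * ballOsc p x t := by
  have hball := closedBall_subset_closedBall' hst
  refine ballOsc_le hs fun z hz => ?_
  have hzx := abs_sub_le_ballOsc hp (hball hz)
  have hyx := abs_sub_le_ballOsc hp (hball (mem_closedBall_self hs))
  grind [abs_sub_le (p z) (p x) (p y), abs_sub_comm (p x) (p y)]

end BallOsc

section Bernstein

variable {E : Type*} [NormedAddCommGroup E] [NormedSpace ℝ E] {N : ℕ} {p : E → ℝ} {x y z : E}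
  {s R δ D : ℝ}

/-- A differentiable function satisfies a Bernstein inequality with exponent `N` if its derivative
on a ball of twice the radius is controlled, in the scale-invariant way, by its oscillation on the
ball. This is the only property of polynomials of bounded degree that the argument uses. -/
structure IsBernstein (N : ℕ) (p : E → ℝ) : Prop where
  differentiable : Differentiable ℝ p
  norm_fderiv_le : ∀ ⦃x : E⦄ ⦃s : ℝ⦄, 0 < s → ∀ y ∈ closedBall x (2 * s),
    2 * s * ‖fderiv ℝ p y‖ ≤ 2 ^ N * ballOsc p x s

namespace IsBernstein

lemma continuous (hp : IsBernstein N p) : Continuous p := hp.differentiable.continuous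

lemma mul_abs_sub_le (hp : IsBernstein N p) (hs : 0 < s) (hy : y ∈ closedBall x (2 * s))
    (hz : z ∈ closedBall x (2 * s)) :
    2 * s * |p y - p z| ≤ 2 ^ N * ballOsc p x s * dist y z := by
  have hbound : ∀ w ∈ closedBall x (2 * s), ‖fderiv ℝ p w‖ ≤ 2 ^ N * ballOsc p x s / (2 * s) :=
    fun w hw => (le_div_iff₀' (by positivity)).2 (hp.norm_fderiv_le hs w hw)
  have hmvt := (convex_closedBall x (2 * s)).norm_image_sub_le_of_norm_fderiv_le
    (fun w _ => hp.differentiable w) hbound hz hy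
  rwa [Real.norm_eq_abs, ← dist_eq_norm, div_mul_eq_mul_div, le_div_iff₀' (by positivity)] at hmvt

lemma ballOsc_two_mul_le (hp : IsBernstein N p) (hs : 0 ≤ s) :
    ballOsc p x (2 * s) ≤ 2 ^ N * ballOsc p x s := by
  rcases hs.eq_or_lt with rfl | hs
  · simp [ballOsc_zero]
  refine ballOsc_le (by positivity) fun y hy => ?_
  have hlip := hp.mul_abs_sub_le hs hy (mem_closedBall_self (by positivity))
  have hosc : 2 ^ N * ballOsc p x s * dist y x ≤ 2 ^ N * ballOsc p x s * (2 * s) :=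
    mul_le_mul_of_nonneg_left hy (mul_nonneg (by positivity) ballOsc_nonneg)
  exact le_of_mul_le_mul_left (by linarith) (by positivity : 0 < 2 * s)

lemma ballOsc_two_pow_mul_le (hp : IsBernstein N p) (hs : 0 ≤ s) (k : ℕ) :
    ballOsc p x (2 ^ k * s) ≤ (2 ^ k) ^ N * ballOsc p x s := by
  induction k with
  | zero => simp
  | succ k ih =>
    calc ballOsc p x (2 ^ (k + 1) * s) = ballOsc p x (2 * (2 ^ k * s)) := by ring_nf
      _ ≤ 2 ^ N * ballOsc p x (2 ^ k * s) := hp.ballOsc_two_mul_le (by positivity)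
      _ ≤ 2 ^ N * ((2 ^ k) ^ N * ballOsc p x s) := by gcongr
      _ = (2 ^ (k + 1)) ^ N * ballOsc p x s := by ring

variable [ProperSpace E]

lemma ballOsc_mul_le (hp : IsBernstein N p) (hs : 0 ≤ s) (hR : 1 ≤ R) :
    ballOsc p x (R * s) ≤ (2 * R) ^ N * ballOsc p x s := by
  obtain ⟨k, hkR, hRk⟩ := exists_nat_pow_near hR one_lt_two
  calc ballOsc p x (R * s) ≤ ballOsc p x (2 ^ (k + 1) * s) :=
        ballOsc_mono hp.continuous (by positivity) (by gcongr)
    _ ≤ (2 ^ (k + 1)) ^ N * ballOsc p x s := hp.ballOsc_two_pow_mul_le hs _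
    _ ≤ (2 * R) ^ N * ballOsc p x s := by
        have := ballOsc_nonneg (p := p) (x := x) (s := s)
        gcongr
        linarith [pow_succ (2 : ℝ) k]

lemma mul_ballOsc_le (hp : IsBernstein N p) (hs : 0 ≤ s) (hR : 1 ≤ R) :
    2 * R * ballOsc p x s ≤ 2 ^ N * ballOsc p x (R * s) := by
  rcases hs.eq_or_lt with rfl | hs
  · simp [ballOsc_zero]
  have hRs : 0 < R * s := by positivity
  obtain ⟨y, hy, hosc⟩ := exists_abs_sub_eq_ballOsc (x := x) hp.continuous hs.le
  have hlip := hp.mul_abs_sub_le hRs (x := x) (y := y) (z := x)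
    (closedBall_subset_closedBall (by nlinarith) hy) (mem_closedBall_self (by positivity))
  have hdist : 2 ^ N * ballOsc p x (R * s) * dist y x ≤ 2 ^ N * ballOsc p x (R * s) * s :=
    mul_le_mul_of_nonneg_left hy (mul_nonneg (by positivity) ballOsc_nonneg)
  rw [hosc] at hlip
  exact le_of_mul_le_mul_right (by linarith) hs

lemma ballOsc_pos (hp : IsBernstein N p) (hne : ∃ a b, p a ≠ p b) (hs : 0 < s) :
    0 < ballOsc p x s := by
  obtain ⟨y, hy⟩ : ∃ y, p y ≠ p x := by
    by_contra! hconst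
    obtain ⟨a, b, hab⟩ := hne
    exact hab ((hconst a).trans (hconst b).symm)
  set R := max 1 (dist y x / s)
  have hyR : y ∈ closedBall x (R * s) := (div_le_iff₀ hs).1 (le_max_right _ _)
  have hpos : 0 < |p y - p x| := abs_pos.2 (sub_ne_zero.2 hy)
  have hgrow := hp.ballOsc_mul_le (x := x) hs.le (le_max_left 1 (dist y x / s))
  exact pos_of_mul_pos_right (hpos.trans_le ((abs_sub_le_ballOsc hp.continuous hyR).trans hgrow))
    (by positivity)

lemma exists_pos_le_ballOsc (hp : IsBernstein N p) (hne : ∃ a b, p a ≠ p b) (hδ : 0 < δ)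
    (x₀ : E) (D : ℝ) : ∃ m > 0, ∀ x ∈ closedBall x₀ D, m ≤ ballOsc p x δ := by
  set R := max 1 ((1 + D) / δ)
  refine ⟨ballOsc p x₀ 1 / (2 * (2 * R) ^ N), ?_, fun x hx => ?_⟩
  · have := hp.ballOsc_pos (x := x₀) hne one_pos
    positivity
  · have hR : 1 + D ≤ R * δ := (div_le_iff₀ hδ).1 (le_max_right _ _)
    rw [div_le_iff₀' (by positivity)]
    calc ballOsc p x₀ 1 ≤ 2 * ballOsc p x (R * δ) := by
          refine ballOsc_le_two_mul hp.continuous zero_le_one ?_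
          rw [mem_closedBall'] at hx
          linarith
      _ ≤ 2 * ((2 * R) ^ N * ballOsc p x δ) := by
          gcongr
          exact hp.ballOsc_mul_le hδ.le (le_max_left _ _)
      _ = 2 * (2 * R) ^ N * ballOsc p x δ := by ring

end IsBernstein

end Bernstein

section OscScale

variable {E : Type*} [NormedAddCommGroup E] [NormedSpace ℝ E] {N : ℕ} {p : E → ℝ} {x y : E}
  {τ s a R δ : ℝ}

/-- The length scale of the weight `τ p` at `x`: the largest radius on which `τ p` oscillates by at
most `1`. -/
def oscScale (p : E → ℝ) (τ : ℝ) (x : E) : ℝ := sSup {s | 0 ≤ s ∧ τ * ballOsc p x s ≤ 1}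

lemma oscScale_nonneg : 0 ≤ oscScale p τ x := Real.sSup_nonneg fun _ hs => hs.1

variable [ProperSpace E]

namespace IsBernstein

lemma bddAbove_mul_ballOsc_le (hp : IsBernstein N p) (hne : ∃ a b, p a ≠ p b) (hτ : 0 < τ) :
    BddAbove {s | 0 ≤ s ∧ τ * ballOsc p x s ≤ 1} := by
  have hpos := hp.ballOsc_pos (x := x) hne one_pos
  refine ⟨max 1 (2 ^ N / (2 * (τ * ballOsc p x 1))), fun s ⟨_, hs⟩ => le_max_iff.2 ?_⟩
  refine or_iff_not_imp_left.2 fun h1s => (le_div_iff₀ (by positivity)).2 ?_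
  have hgrow := hp.mul_ballOsc_le (x := x) zero_le_one (not_le.1 h1s).le
  rw [mul_one] at hgrow
  calc s * (2 * (τ * ballOsc p x 1)) = τ * (2 * s * ballOsc p x 1) := by ring
    _ ≤ τ * (2 ^ N * ballOsc p x s) := by gcongr
    _ = 2 ^ N * (τ * ballOsc p x s) := by ring
    _ ≤ 2 ^ N := mul_le_of_le_one_right (by positivity) hs

lemma le_oscScale_iff (hp : IsBernstein N p) (hne : ∃ a b, p a ≠ p b) (hτ : 0 < τ) (ha : 0 ≤ a) :
    a ≤ oscScale p τ x ↔ τ * ballOsc p x a ≤ 1 := by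
  have hbdd := hp.bddAbove_mul_ballOsc_le (x := x) hne hτ
  refine ⟨fun h => ?_, fun h => le_csSup hbdd ⟨ha, h⟩⟩
  have hclosed : IsClosed {s | 0 ≤ s ∧ τ * ballOsc p x s ≤ 1} :=
    isClosed_Ici.inter
      (isClosed_setOf_mul_ballOsc_le hp.continuous continuous_const continuous_id hτ)
  have hmem := hclosed.csSup_mem ⟨0, le_rfl, by simp [ballOsc_zero]⟩ hbdd
  calc τ * ballOsc p x a ≤ τ * ballOsc p x (oscScale p τ x) := by
        gcongr
        exact ballOsc_mono hp.continuous ha h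
    _ ≤ 1 := hmem.2

lemma oscScale_lt_iff (hp : IsBernstein N p) (hne : ∃ a b, p a ≠ p b) (hτ : 0 < τ) (ha : 0 ≤ a) :
    oscScale p τ x < a ↔ 1 < τ * ballOsc p x a := by
  simpa only [not_le] using (hp.le_oscScale_iff hne hτ ha).not

lemma measurable_oscScale [MeasurableSpace E] [BorelSpace E] (hp : IsBernstein N p)
    (hne : ∃ a b, p a ≠ p b) (hτ : 0 < τ) : Measurable (oscScale p τ) := by
  refine measurable_of_Ici fun a => ?_
  rcases le_total a 0 with ha | ha
  · convert MeasurableSet.univ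
    exact Set.eq_univ_of_forall fun x => ha.trans oscScale_nonneg
  · simp only [Set.preimage, Set.mem_Ici, hp.le_oscScale_iff hne hτ ha]
    exact (isClosed_setOf_mul_ballOsc_le hp.continuous continuous_id continuous_const
      hτ).measurableSet

lemma exists_pos_le_oscScale (hp : IsBernstein N p) (hne : ∃ a b, p a ≠ p b) (hτ : 0 < τ)
    (x₀ : E) (D : ℝ) : ∃ δ > 0, ∀ x ∈ closedBall x₀ D, δ ≤ oscScale p τ x := by
  set A := τ * (2 ^ N * ballOsc p x₀ (1 + D))
  set R := max 1 A
  have hR : 1 ≤ R := le_max_left _ _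
  refine ⟨R⁻¹, by positivity, fun x hx => (hp.le_oscScale_iff hne hτ (by positivity)).2 ?_⟩
  have hgrow := hp.mul_ballOsc_le (x := x) (s := R⁻¹) (by positivity) hR
  rw [mul_inv_cancel₀ (by positivity)] at hgrow
  have hcentre : ballOsc p x 1 ≤ 2 * ballOsc p x₀ (1 + D) :=
    ballOsc_le_two_mul hp.continuous zero_le_one (by linarith [mem_closedBall.1 hx])
  have hA : R * (τ * ballOsc p x R⁻¹) ≤ A := by
    calc R * (τ * ballOsc p x R⁻¹) = τ * (2 * R * ballOsc p x R⁻¹ / 2) := by ring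
      _ ≤ τ * (2 ^ N * (2 * ballOsc p x₀ (1 + D)) / 2) := by
          gcongr τ * ?_
          linarith [mul_le_mul_of_nonneg_left hcentre (by positivity : (0 : ℝ) ≤ 2 ^ N)]
      _ = A := by ring
  exact le_of_mul_le_mul_left (by linarith [le_max_right 1 A]) (by positivity : 0 < R)

lemma oscScale_pos (hp : IsBernstein N p) (hne : ∃ a b, p a ≠ p b) (hτ : 0 < τ) :
    0 < oscScale p τ x := by
  obtain ⟨δ, hδ, h⟩ := hp.exists_pos_le_oscScale hne hτ x 0
  exact hδ.trans_le (h x (mem_closedBall_self le_rfl))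

lemma exists_oscScale_le (hp : IsBernstein N p) (hne : ∃ a b, p a ≠ p b) (hδ : 0 < δ)
    (x₀ : E) (D : ℝ) :
    ∃ τ₀ > 0, ∀ τ ≥ τ₀, ∀ x ∈ closedBall x₀ D, oscScale p τ x ≤ δ := by
  obtain ⟨m, hm, hosc⟩ := hp.exists_pos_le_ballOsc hne hδ x₀ D
  have hτ₀ : 0 < 2 / m := by positivity
  refine ⟨2 / m, hτ₀, fun τ hτ x hx => ((hp.oscScale_lt_iff hne (hτ₀.trans_le hτ) hδ.le).2 ?_).le⟩
  calc (1 : ℝ) < 2 / m * m := by rw [div_mul_cancel₀ _ hm.ne']; exact one_lt_two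
    _ ≤ τ * ballOsc p x δ := mul_le_mul hτ (hosc x hx) hm.le (hτ₀.le.trans hτ)

lemma mul_ballOsc_mul_oscScale_le (hp : IsBernstein N p) (hne : ∃ a b, p a ≠ p b) (hτ : 0 < τ)
    (hR : 1 ≤ R) : τ * ballOsc p x (R * oscScale p τ x) ≤ (2 * R) ^ N := by
  have hscale := (hp.le_oscScale_iff (x := x) hne hτ oscScale_nonneg).1 le_rfl
  calc τ * ballOsc p x (R * oscScale p τ x)
      ≤ τ * ((2 * R) ^ N * ballOsc p x (oscScale p τ x)) := by
        gcongr
        exact hp.ballOsc_mul_le oscScale_nonneg hR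
    _ = (2 * R) ^ N * (τ * ballOsc p x (oscScale p τ x)) := by ring
    _ ≤ (2 * R) ^ N := mul_le_of_le_one_right (by positivity) hscale

lemma lt_mul_ballOsc_mul_oscScale (hp : IsBernstein N p) (hne : ∃ a b, p a ≠ p b) (hτ : 0 < τ)
    (hR : 2 ≤ R) : R < 2 ^ N * (τ * ballOsc p x (R * oscScale p τ x)) := by
  have hℓ := hp.oscScale_pos (x := x) hne hτ
  have hone := (hp.oscScale_lt_iff (x := x) (a := 2 * oscScale p τ x) hne hτ (by positivity)).1
    (by linarith)
  have hgrow := hp.mul_ballOsc_le (x := x) (s := 2 * oscScale p τ x) (R := R / 2) (by positivity)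
    (by linarith)
  calc R < R * (τ * ballOsc p x (2 * oscScale p τ x)) := lt_mul_of_one_lt_right (by linarith) hone
    _ = τ * (2 * (R / 2) * ballOsc p x (2 * oscScale p τ x)) := by ring
    _ ≤ τ * (2 ^ N * ballOsc p x (R / 2 * (2 * oscScale p τ x))) := by gcongr
    _ = 2 ^ N * (τ * ballOsc p x (R * oscScale p τ x)) := by ring_nf

lemma oscScale_le_mul_of_mem_closedBall (hp : IsBernstein N p) (hne : ∃ a b, p a ≠ p b)
    (hτ : 0 < τ) (hR : 1 ≤ R) (hy : y ∈ closedBall x (R * oscScale p τ x)) :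
    oscScale p τ x ≤ (8 * R) ^ N * oscScale p τ y := by
  set ℓ := oscScale p τ x
  have hℓ : 0 < ℓ := hp.oscScale_pos hne hτ
  set B := (8 * R) ^ N
  have hB : 1 ≤ B := one_le_pow₀ (by linarith)
  rw [← div_le_iff₀' (by positivity), hp.le_oscScale_iff hne hτ (by positivity)]
  have hgrow := hp.mul_ballOsc_le (x := y) (s := ℓ / B) (by positivity) hB
  have hcentre : ballOsc p y ℓ ≤ 2 * ballOsc p x (2 * R * ℓ) :=
    ballOsc_le_two_mul hp.continuous hℓ.le (by nlinarith [mem_closedBall.1 hy])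
  have hx := hp.mul_ballOsc_mul_oscScale_le (x := x) (R := 2 * R) hne hτ (by linarith)
  rw [mul_div_cancel₀ _ (by positivity : B ≠ 0)] at hgrow
  have hbound : B * (τ * ballOsc p y (ℓ / B)) ≤ B * 1 := by
    calc B * (τ * ballOsc p y (ℓ / B)) = τ * (2 * B * ballOsc p y (ℓ / B) / 2) := by ring
      _ ≤ τ * (2 ^ N * (2 * ballOsc p x (2 * R * ℓ)) / 2) := by
          gcongr τ * ?_
          linarith [mul_le_mul_of_nonneg_left hcentre (by positivity : (0 : ℝ) ≤ 2 ^ N)]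
      _ = 2 ^ N * (τ * ballOsc p x (2 * R * ℓ)) := by ring
      _ ≤ 2 ^ N * (2 * (2 * R)) ^ N := by gcongr
      _ = B * 1 := by rw [← mul_pow, mul_one]; ring
  exact le_of_mul_le_mul_left hbound (by positivity)

lemma oscScale_le_mul_of_mem_closedBall' (hp : IsBernstein N p) (hne : ∃ a b, p a ≠ p b)
    (hτ : 0 < τ) (hR : 1 ≤ R) (hy : y ∈ closedBall x (R * oscScale p τ x)) :
    oscScale p τ y ≤ 3 * R * 2 ^ N * oscScale p τ x := by
  set ℓ := oscScale p τ x
  have hℓ : 0 < ℓ := hp.oscScale_pos hne hτ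
  have hone := (hp.oscScale_lt_iff (x := x) (a := 2 * ℓ) hne hτ (by positivity)).1 (by linarith)
  have hcentre : ballOsc p x (2 * ℓ) ≤ 2 * ballOsc p y (3 * R * ℓ) :=
    ballOsc_le_two_mul hp.continuous (by positivity) (by nlinarith [mem_closedBall'.1 hy])
  have hgrow := hp.mul_ballOsc_le (x := y) (s := 3 * R * ℓ) (R := 2 ^ N) (by positivity)
    (one_le_pow₀ one_le_two)
  have hosc : 2 * ballOsc p y (3 * R * ℓ) ≤ ballOsc p y (2 ^ N * (3 * R * ℓ)) :=
    le_of_mul_le_mul_left (by linarith) (by positivity : (0 : ℝ) < 2 ^ N)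
  rw [← mul_assoc, mul_comm (2 ^ N) (3 * R)] at hosc
  refine ((hp.oscScale_lt_iff hne hτ (by positivity)).2 (hone.trans_le ?_)).le
  gcongr
  exact hcentre.trans hosc

lemma oscScale_mul_norm_fderiv_le (hp : IsBernstein N p) (hne : ∃ a b, p a ≠ p b) (hτ : 0 < τ) :
    oscScale p τ x * (τ * ‖fderiv ℝ p x‖) ≤ 2 ^ N := by
  have hℓ := hp.oscScale_pos (x := x) hne hτ
  have hscale := (hp.le_oscScale_iff (x := x) hne hτ hℓ.le).1 le_rfl
  have hbern := hp.norm_fderiv_le hℓ x (mem_closedBall_self (by positivity))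
  calc oscScale p τ x * (τ * ‖fderiv ℝ p x‖)
      ≤ τ * (2 * oscScale p τ x * ‖fderiv ℝ p x‖) := by
        have : 0 ≤ oscScale p τ x * (τ * ‖fderiv ℝ p x‖) := by positivity
        linarith
    _ ≤ τ * (2 ^ N * ballOsc p x (oscScale p τ x)) := by gcongr
    _ = 2 ^ N * (τ * ballOsc p x (oscScale p τ x)) := by ring
    _ ≤ 2 ^ N := mul_le_of_le_one_right (by positivity) hscale

end IsBernstein

end OscScale

section FiniteDimensional

lemma exists_norm_le_mul_norm_of_injective {V F G : Type*} [AddCommGroup V] [Module ℝ V]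
    [FiniteDimensional ℝ V] [NormedAddCommGroup F] [NormedSpace ℝ F] [NormedAddCommGroup G]
    [NormedSpace ℝ G] {T : V →ₗ[ℝ] F} (hT : Function.Injective T) (S : V →ₗ[ℝ] G) :
    ∃ K : ℝ, ∀ v, ‖S v‖ ≤ K * ‖T v‖ := by
  let e := LinearEquiv.ofInjective T hT
  let L : T.range →L[ℝ] G := (S ∘ₗ e.symm.toLinearMap).toContinuousLinearMap
  refine ⟨‖L‖, fun v => ?_⟩
  have hL : L (e v) = S v := by simp [L]
  exact hL ▸ L.le_opNorm (e v)

lemma exists_norm_fderiv_le_of_finiteDimensional {E : Type*} [NormedAddCommGroup E]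
    [NormedSpace ℝ E] [ProperSpace E] (V : Submodule ℝ (E → ℝ)) [FiniteDimensional ℝ V]
    (hV : ∀ f ∈ V, ContDiff ℝ 1 f)
    (huniq : ∀ f ∈ V, (∀ w ∈ closedBall (0 : E) 1, f w = 0) → f = 0) :
    ∃ K : ℝ, ∀ f ∈ V, ∀ A, (∀ w : closedBall (0 : E) 1, |f w| ≤ A) →
      ∀ z ∈ closedBall (0 : E) 2, ‖fderiv ℝ f z‖ ≤ K * A := by
  have hcompact (ρ : ℝ) : CompactSpace (closedBall (0 : E) ρ) :=
    isCompact_iff_compactSpace.1 (isCompact_closedBall 0 ρ)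
  have hdiff (f : V) : Differentiable ℝ f.1 := (hV f f.2).differentiable one_ne_zero
  let T : V →ₗ[ℝ] C(closedBall (0 : E) 1, ℝ) :=
    { toFun := fun f => ⟨fun w => f.1 w, (hV f f.2).continuous.comp continuous_subtype_val⟩
      map_add' := fun _ _ => rfl
      map_smul' := fun _ _ => rfl }
  let S : V →ₗ[ℝ] C(closedBall (0 : E) 2, E →L[ℝ] ℝ) :=
    { toFun := fun f => ⟨fun z => fderiv ℝ f.1 z,
        ((hV f f.2).continuous_fderiv one_ne_zero).comp continuous_subtype_val⟩
      map_add' := fun f g => ContinuousMap.ext fun z => fderiv_add (hdiff f z) (hdiff g z)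
      map_smul' := fun c f => ContinuousMap.ext fun z => fderiv_const_smul (hdiff f z) c }
  have hT : Function.Injective T := by
    refine (injective_iff_map_eq_zero T).2 fun f hf => Subtype.ext (huniq f f.2 fun w hw => ?_)
    exact DFunLike.congr_fun hf ⟨w, hw⟩
  obtain ⟨K, hK⟩ := exists_norm_le_mul_norm_of_injective
    (G := C(closedBall (0 : E) 2, E →L[ℝ] ℝ)) hT S
  refine ⟨|K|, fun f hf A hA z hz => ?_⟩
  have : Nonempty (closedBall (0 : E) 1) := ⟨0, by simp⟩
  calc ‖fderiv ℝ f z‖ ≤ ‖S ⟨f, hf⟩‖ := (S ⟨f, hf⟩).norm_coe_le_norm ⟨z, hz⟩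
    _ ≤ K * ‖T ⟨f, hf⟩‖ := hK _
    _ ≤ |K| * ‖T ⟨f, hf⟩‖ := by gcongr; exact le_abs_self K
    _ ≤ |K| * A := by gcongr; exact (ContinuousMap.norm_le_of_nonempty _).2 hA

end FiniteDimensional

section Polynomial

lemma totalDegree_bind₁_le {σ υ R : Type*} [CommSemiring R] {f : σ → MvPolynomial υ R}
    (hf : ∀ i, (f i).totalDegree ≤ 1) (P : MvPolynomial σ R) :
    (MvPolynomial.bind₁ f P).totalDegree ≤ P.totalDegree := by
  rw [MvPolynomial.bind₁, MvPolynomial.aeval_def, MvPolynomial.eval₂_eq]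
  refine MvPolynomial.totalDegree_finsetSum_le fun d hd => ?_
  calc _ ≤ 0 + ∑ i ∈ d.support, d i := by
        refine (MvPolynomial.totalDegree_mul _ _).trans (add_le_add ?_ ?_)
        · rw [MvPolynomial.algebraMap_eq, MvPolynomial.totalDegree_C]
        · refine (MvPolynomial.totalDegree_finsetProd _ _).trans (Finset.sum_le_sum fun i _ => ?_)
          refine (MvPolynomial.totalDegree_pow _ _).trans ?_
          simpa using Nat.mul_le_mul_left (d i) (hf i)
    _ = d.sum fun _ e => e := zero_add _
    _ ≤ P.totalDegree := MvPolynomial.le_totalDegree hd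

variable {n r : ℕ} {p : En n → ℝ}

lemma IsPolyDeg.analyticOnNhd (hp : IsPolyDeg n r p) : AnalyticOnNhd ℝ p Set.univ := by
  obtain ⟨P, -, hP⟩ := hp
  simp only [funext hP, ← MvPolynomial.coe_aeval_eq_eval]
  exact AnalyticOnNhd.aeval_mvPolynomial
    (fun i => (EuclideanSpace.proj i : En n →L[ℝ] ℝ).analyticOnNhd _) P

lemma IsPolyDeg.contDiff (hp : IsPolyDeg n r p) {k : WithTop ℕ∞} : ContDiff ℝ k p :=
  hp.analyticOnNhd.contDiff

lemma IsPolyDeg.comp_add_smul_sub (hp : IsPolyDeg n r p) (x : En n) (s c : ℝ) :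
    IsPolyDeg n r fun z => p (x + s • z) - c := by
  obtain ⟨P, hdeg, hP⟩ := hp
  let affine : Fin n → MvPolynomial (Fin n) ℝ := fun i => .C (x i) + .C s * .X i
  have haffine (i : Fin n) : (affine i).totalDegree ≤ 1 := by
    refine (MvPolynomial.totalDegree_add _ _).trans (max_le ?_ ?_)
    · simp
    · simpa using MvPolynomial.totalDegree_mul (.C s) (.X i : MvPolynomial (Fin n) ℝ)
  refine ⟨MvPolynomial.bind₁ affine P - .C c, ?_, fun z => ?_⟩
  · exact (MvPolynomial.totalDegree_sub_C_le _ _).trans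
      ((totalDegree_bind₁_le haffine P).trans hdeg)
  · simp only [hP, map_sub, ← MvPolynomial.coe_aeval_eq_eval, RingHom.coe_coe,
      MvPolynomial.aeval_bind₁]
    simp [affine]

/-- The space of polynomial functions of degree at most `r`. -/
def polyFunctions (n r : ℕ) : Submodule ℝ (En n → ℝ) :=
  (MvPolynomial.restrictTotalDegree (Fin n) ℝ r).map
    (LinearMap.pi fun x : En n => (MvPolynomial.aeval fun i => x i).toLinearMap)

lemma mem_polyFunctions : p ∈ polyFunctions n r ↔ IsPolyDeg n r p := by
  simp only [polyFunctions, Submodule.mem_map, MvPolynomial.mem_restrictTotalDegree, IsPolyDeg,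
    funext_iff, eq_comm (b := p _)]
  rfl

instance : FiniteDimensional ℝ (polyFunctions n r) := by
  unfold polyFunctions
  infer_instance

lemma exists_isBernstein_of_isPolyDeg (n r : ℕ) :
    ∃ N : ℕ, ∀ p : En n → ℝ, IsPolyDeg n r p → IsBernstein N p := by
  obtain ⟨K, hK⟩ := exists_norm_fderiv_le_of_finiteDimensional (polyFunctions n r)
    (fun f hf => (mem_polyFunctions.1 hf).contDiff) fun f hf hzero =>
      (mem_polyFunctions.1 hf).analyticOnNhd.eq_of_eventuallyEq analyticOnNhd_const
        (eventually_of_mem (closedBall_mem_nhds 0 one_pos) hzero)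
  obtain ⟨N, hN⟩ := pow_unbounded_of_one_lt (2 * K) one_lt_two
  refine ⟨N, fun p hp => ⟨hp.contDiff.differentiable one_ne_zero, fun x s hs y hy => ?_⟩⟩
  have hosc := hK (fun z => p (x + s • z) - p x) (mem_polyFunctions.2 (hp.comp_add_smul_sub x s _))
    _ ((ballOsc_le_iff (hp.contDiff (k := 0)).continuous).1 le_rfl) (s⁻¹ • (y - x)) (by
      rw [mem_closedBall_zero_iff, norm_smul, norm_inv, Real.norm_of_nonneg hs.le,
        inv_mul_le_iff₀ hs, ← dist_eq_norm, mul_comm]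
      exact hy)
  have hscale (z : En n) :
      fderiv ℝ (fun z => p (x + s • z) - p x) z = s • fderiv ℝ p (x + s • z) := by
    rw [fderiv_sub_const, fderiv_comp_smul (f := fun z => p (x + z)), fderiv_comp_add_left]
  rw [hscale, smul_inv_smul₀ hs.ne', add_sub_cancel, norm_smul, Real.norm_of_nonneg hs.le] at hosc
  calc 2 * s * ‖fderiv ℝ p y‖ ≤ 2 * K * ballOsc p x s := by linarith
    _ ≤ 2 ^ N * ballOsc p x s := mul_le_mul_of_nonneg_right hN.le ballOsc_nonneg

end Polynomial

section SecondDerivativeTest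

lemma deriv_deriv_nonneg_of_isLocalMin {f : ℝ → ℝ} {a : ℝ} (hmin : IsLocalMin f a)
    (hf : ContinuousAt f a) : 0 ≤ deriv (deriv f) a := by
  by_contra! hneg
  have hmax := isLocalMax_of_deriv_deriv_neg hneg hmin.deriv_eq_zero hf
  have hconst : f =ᶠ[𝓝 a] fun _ => f a := by
    filter_upwards [hmin, hmax] with t hmin hmax using hmax.antisymm hmin
  have hderiv := hconst.deriv.deriv_eq
  simp only [deriv_const', deriv_const] at hderiv
  exact hneg.ne hderiv

variable {E : Type*} [NormedAddCommGroup E] [NormedSpace ℝ E] {f : E → ℝ} {z : E}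

lemma fderiv_fderiv_apply_self_nonneg_of_isLocalMin (hf : ContDiff ℝ 2 f) (hmin : IsLocalMin f z)
    (v : E) : 0 ≤ fderiv ℝ (fderiv ℝ f) z v v := by
  have hline (t : ℝ) : HasDerivAt (fun t : ℝ => z + t • v) v t := by
    simpa using ((hasDerivAt_id t).smul_const v).const_add z
  have hderiv : deriv (fun t : ℝ => f (z + t • v)) = fun t => fderiv ℝ f (z + t • v) v :=
    funext fun t => ((hf.differentiable two_ne_zero _).hasFDerivAt.comp_hasDerivAt t
      (hline t)).deriv
  have hderiv₂ : deriv (deriv fun t : ℝ => f (z + t • v)) 0 = fderiv ℝ (fderiv ℝ f) z v v := by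
    have hD : HasDerivAt (fun t : ℝ => fderiv ℝ f (z + t • v))
        (fderiv ℝ (fderiv ℝ f) (z + (0 : ℝ) • v) v) 0 :=
      ((hf.fderiv_right (m := 1) le_rfl).differentiable one_ne_zero
        (z + (0 : ℝ) • v)).hasFDerivAt.comp_hasDerivAt 0 (hline 0)
    rw [hderiv, (hD.clm_apply (hasDerivAt_const 0 v)).deriv]
    simp
  have hcont : Continuous fun t : ℝ => z + t • v := by fun_prop
  rw [← hderiv₂]
  refine deriv_deriv_nonneg_of_isLocalMin ?_ (hf.continuous.comp hcont).continuousAt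
  have htendsto : Tendsto (fun t : ℝ => z + t • v) (𝓝 0) (𝓝 z) := by
    simpa using hcont.tendsto 0
  simpa [IsLocalMin, IsMinFilter] using htendsto.eventually hmin

lemma fderiv_fderiv_apply_self_le_of_isLocalMin_sub {g : E → ℝ} (hf : ContDiff ℝ 2 f)
    (hg : ContDiff ℝ 2 g) (hmin : IsLocalMin (fun x => f x - g x) z) (v : E) :
    fderiv ℝ (fderiv ℝ g) z v v ≤ fderiv ℝ (fderiv ℝ f) z v v := by
  have htest := fderiv_fderiv_apply_self_nonneg_of_isLocalMin (hf.sub hg) hmin v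
  have hsub : fderiv ℝ (fun x => f x - g x) = fun x => fderiv ℝ f x - fderiv ℝ g x :=
    funext fun x => fderiv_fun_sub (hf.differentiable two_ne_zero x)
      (hg.differentiable two_ne_zero x)
  rw [hsub, fderiv_fun_sub ((hf.fderiv_right (m := 1) le_rfl).differentiable one_ne_zero z)
    ((hg.fderiv_right (m := 1) le_rfl).differentiable one_ne_zero z)] at htest
  simpa using htest

end SecondDerivativeTest

section Gaussian

variable {E : Type*} [NormedAddCommGroup E] [InnerProductSpace ℝ E] {a z : E} {b ε : ℝ}

lemma contDiff_gaussian {k : WithTop ℕ∞} :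
    ContDiff ℝ k fun x : E => ε * Real.exp (-b * ‖x - a‖ ^ 2) :=
  contDiff_const.mul (contDiff_const.mul ((contDiff_id.sub contDiff_const).norm_sq ℝ)).exp

lemma hasFDerivAt_gaussian :
    HasFDerivAt (fun x : E => ε * Real.exp (-b * ‖x - a‖ ^ 2))
      ((-2 * b * (ε * Real.exp (-b * ‖z - a‖ ^ 2))) • innerSL ℝ (z - a)) z := by
  refine ((((hasFDerivAt_id z).sub_const a).norm_sq.const_mul (-b)).exp.const_mul ε).congr_fderiv ?_
  ext v
  simp only [id_eq, map_sub, ContinuousLinearMap.comp_id, smul_apply, sub_apply,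
    coe_innerSL_apply, nsmul_eq_mul, Nat.cast_ofNat, smul_eq_mul]
  ring

lemma fderiv_fderiv_gaussian (v : E) :
    fderiv ℝ (fderiv ℝ fun x : E => ε * Real.exp (-b * ‖x - a‖ ^ 2)) z v v =
      ε * Real.exp (-b * ‖z - a‖ ^ 2) *
        (4 * b ^ 2 * inner ℝ (z - a) v ^ 2 - 2 * b * ‖v‖ ^ 2) := by
  have hD : fderiv ℝ (fun x : E => ε * Real.exp (-b * ‖x - a‖ ^ 2)) =
      fun x => (-2 * b * (ε * Real.exp (-b * ‖x - a‖ ^ 2))) • innerSL ℝ (x - a) :=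
    funext fun x => hasFDerivAt_gaussian.fderiv
  have hD₂ := ((hasFDerivAt_gaussian (a := a) (z := z) (b := b) (ε := ε)).const_mul
    (-2 * b)).smul ((innerSL ℝ).hasFDerivAt.comp z ((hasFDerivAt_id z).sub_const a))
  rw [hD]
  refine (congrArg (fun L => L v v) hD₂.fderiv).trans ?_
  change -2 * b * (ε * Real.exp (-b * ‖z - a‖ ^ 2)) * inner ℝ v v +
    -2 * b * (-2 * b * (ε * Real.exp (-b * ‖z - a‖ ^ 2)) * inner ℝ (z - a) v) *
      inner ℝ (z - a) v = _
  rw [real_inner_self_eq_norm_sq]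
  ring

end Gaussian

section Hessian

variable {n : ℕ} {p : En n → ℝ} {x : En n}

lemma norm_gradient {E : Type*} [NormedAddCommGroup E] [InnerProductSpace ℝ E] [CompleteSpace E]
    (f : E → ℝ) (x : E) : ‖gradient f x‖ = ‖fderiv ℝ f x‖ :=
  LinearIsometryEquiv.norm_map _ _

lemma hessM_apply (hp : ContDiff ℝ 2 p) (i j : Fin n) :
    hessM n p x i j = fderiv ℝ (fderiv ℝ p) x (EuclideanSpace.single i 1)
      (EuclideanSpace.single j 1) := by
  have hD := (hp.fderiv_right (m := 1) le_rfl).differentiable one_ne_zero x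
  change fderiv ℝ (fun y => fderiv ℝ p y (EuclideanSpace.single j 1)) x _ = _
  rw [fderiv_clm_apply hD (differentiableAt_const _)]
  simp

lemma isHermitian_hessM (hp : ContDiff ℝ 2 p) : (hessM n p x).IsHermitian := by
  ext i j
  have hsymm : IsSymmSndFDerivAt ℝ p x := hp.contDiffAt.isSymmSndFDerivAt (by simp)
  rw [Matrix.conjTranspose_apply, hessM_apply hp, hessM_apply hp, hsymm.eq]
  rfl

lemma fderiv_fderiv_apply_eq_dotProduct (hp : ContDiff ℝ 2 p) (v : En n) :
    fderiv ℝ (fderiv ℝ p) x v v = v.ofLp ⬝ᵥ (hessM n p x).mulVec v.ofLp := by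
  conv_lhs => rw [← (EuclideanSpace.basisFun (Fin n) ℝ).sum_repr v]
  simp only [EuclideanSpace.basisFun_repr, EuclideanSpace.basisFun_apply, map_sum, map_smul,
    sum_apply, smul_apply, smul_eq_mul, dotProduct,
    Matrix.mulVec, hessM_apply hp]
  simp only [Finset.mul_sum]
  rw [Finset.sum_comm]
  exact Finset.sum_congr rfl fun i _ => Finset.sum_congr rfl fun j _ => by ring

lemma sum_hessEig (hp : ContDiff ℝ 2 p) :
    ∑ j, hessEig n p x j = ∑ i, fderiv ℝ (fderiv ℝ p) x (EuclideanSpace.single i 1)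
      (EuclideanSpace.single i 1) := by
  have htrace := (isHermitian_hessM (x := x) hp).trace_eq_sum_eigenvalues
  simp only [Matrix.trace, Matrix.diag_apply, hessM_apply hp] at htrace
  rw [htrace, hessEig, dif_pos (isHermitian_hessM hp)]
  rfl

lemma exists_norm_eq_one_hessEig_eq (hp : ContDiff ℝ 2 p) (j : Fin n) :
    ∃ v : En n, ‖v‖ = 1 ∧ hessEig n p x j = fderiv ℝ (fderiv ℝ p) x v v := by
  have hH := isHermitian_hessM (x := x) hp
  refine ⟨hH.eigenvectorBasis j, hH.eigenvectorBasis.norm_eq_one j, ?_⟩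
  rw [fderiv_fderiv_apply_eq_dotProduct hp, hH.mulVec_eigenvectorBasis, hessEig, dif_pos hH]
  have hunit := EuclideanSpace.real_norm_sq_eq (hH.eigenvectorBasis j)
  rw [hH.eigenvectorBasis.norm_eq_one] at hunit
  rw [dotProduct_smul, smul_eq_mul]
  simp [dotProduct, ← sq, ← hunit]

lemma le_hessEig (hp : ContDiff ℝ 2 p) {m : ℝ}
    (hm : ∀ v, m * ‖v‖ ^ 2 ≤ fderiv ℝ (fderiv ℝ p) x v v) (j : Fin n) : m ≤ hessEig n p x j := by
  obtain ⟨v, hv, heig⟩ := exists_norm_eq_one_hessEig_eq (x := x) hp j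
  simpa [hv, heig] using hm v

lemma lamNeg_le (hp : ContDiff ℝ 2 p) {m : ℝ} (hm₀ : 0 ≤ m)
    (hm : ∀ v, -m * ‖v‖ ^ 2 ≤ fderiv ℝ (fderiv ℝ p) x v v) : lamNeg n p x ≤ n * m := by
  refine (Finset.sum_le_card_nsmul _ _ m fun j _ => max_le ?_ hm₀).trans_eq (by simp)
  exact neg_le.1 (le_hessEig hp hm j)

lemma sum_fderiv_fderiv_le_lamPos (hp : ContDiff ℝ 2 p) :
    ∑ i, fderiv ℝ (fderiv ℝ p) x (EuclideanSpace.single i 1) (EuclideanSpace.single i 1) ≤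
      lamPos n p x := by
  rw [← sum_hessEig hp]
  exact Finset.sum_le_sum fun j _ => le_max_left _ _

end Hessian

section GaussianComparison

variable {n : ℕ} {p : En n → ℝ} {z a : En n} {C b ε P₀ r₁ r₂ : ℝ}

/-- The eigenvalue estimate `∑_{λ_j > 0} λ_j ≤ C (M_p + |∇p|²)` at the point `x`. -/
def SpectralBoundAt (C : ℝ) (p : En n → ℝ) (x : En n) : Prop :=
  lamPos n p x ≤ C * (lamNeg n p x + ‖gradient p x‖ ^ 2)

/-- Touching `p` from below by a Gaussian is a second-order test: the Gaussian forces negative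
eigenvalues `O(bε)` and gradient `O(bε|z - a|)`, but a trace of order `b²ε|z - a|²`. -/
lemma mul_norm_sub_sq_le_of_isLocalMin_sub_gaussian (hp : ContDiff ℝ 2 p) (hC : 0 ≤ C)
    (hb : 0 < b) (hε : 0 < ε) (hCε : C * ε ≤ 1 / 2) (hspec : SpectralBoundAt C p z)
    (hmin : IsLocalMin (fun x => p x - ε * Real.exp (-b * ‖x - a‖ ^ 2)) z) :
    b * ‖z - a‖ ^ 2 ≤ n * (1 + C) := by
  set g : ℝ := ε * Real.exp (-b * ‖z - a‖ ^ 2) with hg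
  have : 0 < g := by positivity
  have hCg : C * g ≤ 1 / 2 := by
    refine le_trans (mul_le_mul_of_nonneg_left (mul_le_of_le_one_right hε.le ?_) hC) hCε
    exact Real.exp_le_one_iff.2 (by nlinarith [sq_nonneg ‖z - a‖])
  have hsecond (v : En n) : g * (4 * b ^ 2 * inner ℝ (z - a) v ^ 2 - 2 * b * ‖v‖ ^ 2) ≤
      fderiv ℝ (fderiv ℝ p) z v v := by
    rw [hg, ← fderiv_fderiv_gaussian]
    exact fderiv_fderiv_apply_self_le_of_isLocalMin_sub hp contDiff_gaussian hmin v
  have hnorm : ‖fderiv ℝ p z‖ = 2 * b * g * ‖z - a‖ := by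
    have hcrit := hmin.fderiv_eq_zero
    rw [fderiv_fun_sub (hp.differentiable two_ne_zero z) hasFDerivAt_gaussian.differentiableAt,
      hasFDerivAt_gaussian.fderiv, sub_eq_zero] at hcrit
    rw [hcrit, norm_smul, innerSL_apply_norm, Real.norm_eq_abs, neg_mul, neg_mul, abs_neg,
      abs_of_pos (by positivity)]
  have hneg : lamNeg n p z ≤ n * (2 * b * g) := by
    refine lamNeg_le hp (by positivity) fun v => le_trans ?_ (hsecond v)
    linear_combination (4 * g * b ^ 2) * sq_nonneg (inner ℝ (z - a) v)
  have hpos : g * (4 * b ^ 2 * ‖z - a‖ ^ 2 - 2 * b * n) ≤ lamPos n p z := by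
    refine le_trans ?_ (sum_fderiv_fderiv_le_lamPos hp)
    refine le_trans (le_of_eq ?_) (Finset.sum_le_sum fun i _ => hsecond (.single i 1))
    rw [← Finset.mul_sum, Finset.sum_sub_distrib, ← Finset.mul_sum,
      EuclideanSpace.real_norm_sq_eq]
    simp [EuclideanSpace.inner_single_right, mul_comm]
  have hchain : g * (4 * b ^ 2 * ‖z - a‖ ^ 2 - 2 * b * n) ≤
      C * (n * (2 * b * g) + (2 * b * g * ‖z - a‖) ^ 2) := by
    refine hpos.trans (hspec.trans ?_)
    rw [norm_gradient, hnorm]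
    gcongr
  refine le_of_mul_le_mul_left ?_ (by positivity : 0 < 2 * b * g)
  linear_combination hchain + (4 * b ^ 2 * g * ‖z - a‖ ^ 2) * hCg

lemma add_gaussian_sub_le_of_spectralBoundAt (hp : ContDiff ℝ 2 p) (hC : 0 ≤ C) (hb : 0 < b)
    (hε : 0 < ε) (hCε : C * ε ≤ 1 / 2) (hr₁ : 0 ≤ r₁) (hbr₁ : n * (1 + C) < b * r₁ ^ 2)
    (hspec : ∀ z ∈ closedBall a r₂, SpectralBoundAt C p z)
    (hr₂_le : ∀ z ∈ closedBall a r₂, P₀ ≤ p z) (hr₁_le : ∀ z ∈ closedBall a r₁, P₀ + ε ≤ p z) :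
    ∀ z ∈ closedBall a r₂,
      P₀ + ε * (Real.exp (-b * ‖z - a‖ ^ 2) - Real.exp (-b * r₂ ^ 2)) ≤ p z := by
  intro z hz
  have hcont : Continuous fun x => p x - ε * Real.exp (-b * ‖x - a‖ ^ 2) :=
    hp.continuous.sub (contDiff_gaussian (k := 0)).continuous
  obtain ⟨m, hm, hmin⟩ := (isCompact_closedBall a r₂).exists_isMinOn ⟨z, hz⟩ hcont.continuousOn
  suffices P₀ - ε * Real.exp (-b * r₂ ^ 2) ≤ p m - ε * Real.exp (-b * ‖m - a‖ ^ 2) by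
    linarith [isMinOn_iff.1 hmin z hz]
  rcases le_or_gt ‖m - a‖ r₁ with hinner | hinner
  · have hexp : Real.exp (-b * ‖m - a‖ ^ 2) ≤ 1 :=
      Real.exp_le_one_iff.2 (by nlinarith [sq_nonneg ‖m - a‖])
    have hexp₂ := mul_nonneg hε.le (Real.exp_pos (-b * r₂ ^ 2)).le
    linarith [hr₁_le m (mem_closedBall_iff_norm.2 hinner), mul_le_of_le_one_right hε.le hexp]
  rcases lt_or_ge ‖m - a‖ r₂ with houter | houter
  · have hlocal : IsLocalMin (fun x => p x - ε * Real.exp (-b * ‖x - a‖ ^ 2)) m :=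
      hmin.isLocalMin (closedBall_mem_nhds_of_mem (mem_ball_iff_norm.2 houter))
    have hbound := mul_norm_sub_sq_le_of_isLocalMin_sub_gaussian hp hC hb hε hCε (hspec m hm) hlocal
    have : b * r₁ ^ 2 ≤ b * ‖m - a‖ ^ 2 := by gcongr
    linarith
  · have heq : ‖m - a‖ = r₂ := (mem_closedBall_iff_norm.1 hm).antisymm houter
    rw [heq]
    exact sub_le_sub_right (hr₂_le m hm) _

end GaussianComparison

section Descent

variable {n N : ℕ} {p : En n → ℝ} {x y : En n} {C s β ε ρ : ℝ}

lemma exists_add_le_of_forall_closedBall_add_le (hp : ContDiff ℝ 2 p) (hC : 0 ≤ C) (hs : 0 < s)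
    (hε : 0 < ε) (hCε : C * ε ≤ 1 / 2) (hρ : 0 ≤ ρ) (hβ : n * (1 + C) < β * ρ ^ 2)
    (hspec : ∀ z ∈ closedBall y (s / 2), SpectralBoundAt C p z) (hxy : x ∈ closedBall y (s / 4))
    (hinner : ∀ z ∈ closedBall y (ρ * s), p x + ε ≤ p z) :
    ∃ w ∈ closedBall y (s / 2),
      p w + ε * (Real.exp (-β / 16) - Real.exp (-β / 4)) ≤ p x := by
  have hβ₀ : 0 < β := pos_of_mul_pos_left (lt_of_le_of_lt (by positivity) hβ) (sq_nonneg ρ)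
  have hxy' : x ∈ closedBall y (s / 2) := closedBall_subset_closedBall (by linarith) hxy
  obtain ⟨w, hw, hmin⟩ := (isCompact_closedBall y (s / 2)).exists_isMinOn ⟨x, hxy'⟩
    hp.continuous.continuousOn
  refine ⟨w, hw, le_trans ?_ (add_gaussian_sub_le_of_spectralBoundAt hp hC
    (by positivity : 0 < β / s ^ 2) hε hCε (by positivity : 0 ≤ ρ * s)
    (by field_simp; linarith) hspec (isMinOn_iff.1 hmin)
    (fun z hz => le_trans (by linarith [isMinOn_iff.1 hmin x hxy']) (hinner z hz)) x hxy')⟩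
  have hexp₁ : -β / 16 ≤ -(β / s ^ 2) * ‖x - y‖ ^ 2 := by
    calc -β / 16 = -(β / s ^ 2 * (s / 4) ^ 2) := by field_simp; norm_num
      _ ≤ -(β / s ^ 2 * ‖x - y‖ ^ 2) := by
        gcongr
        exact mem_closedBall_iff_norm.1 hxy
      _ = -(β / s ^ 2) * ‖x - y‖ ^ 2 := (neg_mul _ _).symm
  have hexp₂ : -(β / s ^ 2) * (s / 2) ^ 2 = -β / 4 := by
    field_simp
    norm_num
  rw [hexp₂]
  gcongr

namespace IsBernstein

lemma abs_sub_le_of_mem_closedBall_mul (hp : IsBernstein N p) (hs : 0 < s) (hρ : ρ ≤ 1)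
    (hy : y ∈ closedBall x s) (hz : z ∈ closedBall y (ρ * s)) :
    2 * |p z - p y| ≤ 2 ^ N * ρ * ballOsc p x s := by
  have hρs : ρ * s ≤ s := mul_le_of_le_one_left hs.le hρ
  have hlip := hp.mul_abs_sub_le hs
    (closedBall_subset_closedBall' (by linarith [mem_closedBall.1 hy]) hz)
    (closedBall_subset_closedBall (by linarith) hy)
  have hdist : 2 ^ N * ballOsc p x s * dist z y ≤ 2 ^ N * ballOsc p x s * (ρ * s) :=
    mul_le_mul_of_nonneg_left hz (mul_nonneg (by positivity) ballOsc_nonneg)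
  exact le_of_mul_le_mul_right (by linarith) hs

lemma exists_le_sub_of_add_le (hp : IsBernstein N p) (hp₂ : ContDiff ℝ 2 p) (hC : 0 ≤ C)
    (hs : 0 < s) (hpos : 0 < ballOsc p x s) (hsmall : C * ballOsc p x s ≤ 1 / 2)
    (hspec : ∀ z ∈ closedBall x s, SpectralBoundAt C p z) (hy : y ∈ closedBall x (s / 4))
    (hpy : p x + ((4 : ℝ) ^ N)⁻¹ * ballOsc p x s ≤ p y)
    (hβ : n * (1 + C) < β * (((8 : ℝ) ^ N)⁻¹) ^ 2) :
    ∃ w ∈ closedBall x (3 * s / 4), p w ≤ p x -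
      ((4 : ℝ) ^ N)⁻¹ / 2 * (Real.exp (-β / 16) - Real.exp (-β / 4)) * ballOsc p x s := by
  have hρ₁ : ((8 : ℝ) ^ N)⁻¹ ≤ 1 := inv_le_one_of_one_le₀ (one_le_pow₀ (by norm_num))
  have hκ₁ : ((4 : ℝ) ^ N)⁻¹ ≤ 1 := inv_le_one_of_one_le₀ (one_le_pow₀ (by norm_num))
  have hyx := mem_closedBall.1 hy
  have hinner : ∀ z ∈ closedBall y (((8 : ℝ) ^ N)⁻¹ * s),
      p x + ((4 : ℝ) ^ N)⁻¹ / 2 * ballOsc p x s ≤ p z := by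
    intro z hz
    have hclose := hp.abs_sub_le_of_mem_closedBall_mul hs hρ₁
      (closedBall_subset_closedBall (by linarith) hy) hz
    have hconst : (2 : ℝ) ^ N * (8 ^ N)⁻¹ = (4 ^ N)⁻¹ := by
      rw [← inv_pow, ← inv_pow, ← mul_pow]
      norm_num
    rw [hconst] at hclose
    linarith [neg_abs_le (p z - p y)]
  have hCε : C * (((4 : ℝ) ^ N)⁻¹ / 2 * ballOsc p x s) ≤ 1 / 2 :=
    (mul_le_mul_of_nonneg_left (mul_le_of_le_one_left hpos.le (by linarith)) hC).trans hsmall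
  obtain ⟨w, hw, hpw⟩ := exists_add_le_of_forall_closedBall_add_le hp₂ hC hs
    (by positivity) hCε (by positivity) hβ
    (fun z hz => hspec z (closedBall_subset_closedBall' (by linarith) hz))
    (mem_closedBall_comm.1 hy) hinner
  exact ⟨w, closedBall_subset_closedBall' (by linarith) hw, by linarith⟩

lemma exists_le_sub_mul_ballOsc (n N : ℕ) {C : ℝ} (hC : 0 ≤ C) :
    ∃ c > 0, ∀ {p : En n → ℝ}, IsBernstein N p → ContDiff ℝ 2 p → ∀ {x : En n} {s : ℝ}, 0 < s →
      0 < ballOsc p x s → C * ballOsc p x s ≤ 1 / 2 →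
      (∀ z ∈ closedBall x s, SpectralBoundAt C p z) →
      ∃ w ∈ closedBall x (3 * s / 4), p w ≤ p x - c * ballOsc p x s := by
  set β : ℝ := (n * (1 + C) + 1) / (((8 : ℝ) ^ N)⁻¹) ^ 2 with hβ_def
  have hβ : n * (1 + C) < β * (((8 : ℝ) ^ N)⁻¹) ^ 2 := by
    rw [hβ_def, div_mul_cancel₀ _ (by positivity)]
    linarith
  have hβ₀ : 0 < β := by positivity
  have hexp : 0 < Real.exp (-β / 16) - Real.exp (-β / 4) :=
    sub_pos.2 (Real.exp_lt_exp.2 (by linarith))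
  refine ⟨(4 ^ N)⁻¹ / 2 * (Real.exp (-β / 16) - Real.exp (-β / 4)), by positivity, ?_⟩
  intro p hp hp₂ x s hs hpos hsmall hspec
  obtain ⟨y, hy, hosc⟩ := exists_abs_sub_eq_ballOsc (x := x) hp.continuous
    (by positivity : 0 ≤ s / 4)
  have hκ : (4 ^ N)⁻¹ * ballOsc p x s ≤ |p y - p x| := by
    rw [hosc, inv_mul_le_iff₀ (by positivity)]
    have hgrow := hp.ballOsc_two_pow_mul_le (x := x) (by positivity : 0 ≤ s / 4) 2
    rwa [show (2 : ℝ) ^ 2 = 4 by norm_num, mul_div_cancel₀ s four_ne_zero] at hgrow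
  rcases le_abs.1 hκ with habove | hbelow
  · exact hp.exists_le_sub_of_add_le hp₂ hC hs hpos hsmall hspec hy (by linarith) hβ
  · refine ⟨y, closedBall_subset_closedBall (by linarith) hy, ?_⟩
    have hexp₁ : Real.exp (-β / 16) - Real.exp (-β / 4) ≤ 1 := by
      linarith [Real.exp_pos (-β / 4), Real.exp_le_one_iff.2 (by linarith : -β / 16 ≤ 0)]
    have : (4 ^ N)⁻¹ / 2 * (Real.exp (-β / 16) - Real.exp (-β / 4)) * ballOsc p x s ≤
        (4 ^ N)⁻¹ * ballOsc p x s := by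
      gcongr
      nlinarith [(by positivity : (0 : ℝ) < (4 ^ N)⁻¹)]
    linarith

lemma exists_forall_closedBall_le_sub_mul_ballOsc (n N : ℕ) {C : ℝ} (hC : 0 ≤ C) :
    ∃ c > 0, ∃ ρ > 0, ∀ {p : En n → ℝ}, IsBernstein N p → ContDiff ℝ 2 p →
      ∀ {x : En n} {s : ℝ}, 0 < s → 0 < ballOsc p x s → C * ballOsc p x s ≤ 1 / 2 →
      (∀ z ∈ closedBall x s, SpectralBoundAt C p z) →
      ∃ w, closedBall w (ρ * s) ⊆ closedBall x s ∧
        ∀ z ∈ closedBall w (ρ * s), p z ≤ p x - c * ballOsc p x s := by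
  obtain ⟨c, hc, hdescent⟩ := exists_le_sub_mul_ballOsc n N hC
  set ρ := min (1 / 4) (c / 2 ^ N)
  have hρ : ρ ≤ 1 / 4 := min_le_left _ _
  have hρc : 2 ^ N * ρ ≤ c := (le_div_iff₀' (by positivity)).1 (min_le_right _ _)
  refine ⟨c / 2, half_pos hc, ρ, by positivity, fun {p} hp hp₂ x s hs hpos hsmall hspec => ?_⟩
  obtain ⟨w, hw, hpw⟩ := hdescent hp hp₂ hs hpos hsmall hspec
  have hwx := mem_closedBall.1 hw
  refine ⟨w, closedBall_subset_closedBall' (by nlinarith), fun z hz => ?_⟩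
  have hclose := hp.abs_sub_le_of_mem_closedBall_mul hs (by linarith)
    (closedBall_subset_closedBall (by linarith) hw) hz
  have : 2 ^ N * ρ * ballOsc p x s ≤ c * ballOsc p x s := by gcongr
  linarith [le_abs_self (p z - p w)]

end IsBernstein

end Descent

section BallKernel

open Module

variable {E : Type*} [NormedAddCommGroup E] [MeasurableSpace E]
  {μ : Measure E} {L : E → ℝ} {B ρ t : ℝ}

/-- The density `h ↦ 1_{‖h‖ ≤ L x} / μ {‖h‖ ≤ L x}` of the average over increments `h` from `x` of
size at most `L x`. -/
def ballKernel (μ : Measure E) (L : E → ℝ) (x h : E) : ENNReal :=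
  (closedBall 0 (L x)).indicator (fun _ => (μ (closedBall 0 (L x)))⁻¹) h

/-- A positive radius function that changes by at most a factor `B` on each of the balls
`closedBall x (L x)`. Measurability is included because `L` need not be continuous. -/
structure IsSlowlyVarying (B : ℝ) (L : E → ℝ) : Prop where
  measurable : Measurable L
  pos : ∀ x, 0 < L x
  le_mul : ∀ {x y}, y ∈ closedBall x (L x) → L x ≤ B * L y
  le_mul' : ∀ {x y}, y ∈ closedBall x (L x) → L y ≤ B * L x

lemma IsSlowlyVarying.const_pos (hL : IsSlowlyVarying B L) : 0 < B :=
  pos_of_mul_pos_left ((hL.pos 0).trans_le (hL.le_mul (mem_closedBall_self (hL.pos 0).le)))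
    (hL.pos 0).le

lemma measurable_ballKernel [BorelSpace E] (hL : Measurable L) {X : Type*} [MeasurableSpace X]
    {f g : X → E} (hf : Measurable f) (hg : Measurable g) :
    Measurable fun a => ballKernel μ L (f a) (g a) := by
  have hball : Monotone fun r => μ (closedBall (0 : E) r) := fun r r' hr =>
    measure_mono (closedBall_subset_closedBall hr)
  have hset : MeasurableSet {a | ‖g a‖ ≤ L (f a)} := measurableSet_le hg.norm (hL.comp hf)
  convert ((hball.measurable.comp (hL.comp hf)).inv).indicator hset using 1
  ext a
  simp [ballKernel, Set.indicator]

variable [NormedSpace ℝ E]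

lemma ballKernel_sub_smul_le {y h : E} (hL : IsSlowlyVarying B L) (ht : |t| ≤ 1) :
    ballKernel μ L (y - t • h) h ≤
      (closedBall 0 (B * L y)).indicator (fun _ => (μ (closedBall 0 (L y / B)))⁻¹) h := by
  by_cases hh : h ∈ closedBall 0 (L (y - t • h))
  · have hnorm : ‖h‖ ≤ L (y - t • h) := mem_closedBall_zero_iff.1 hh
    have hy : y ∈ closedBall (y - t • h) (L (y - t • h)) := by
      rw [mem_closedBall_iff_norm, sub_sub_cancel, norm_smul, Real.norm_eq_abs]
      exact (mul_le_of_le_one_left (norm_nonneg h) ht).trans hnorm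
    rw [ballKernel, Set.indicator_of_mem hh,
      Set.indicator_of_mem (mem_closedBall_zero_iff.2 (hnorm.trans (hL.le_mul hy)))]
    gcongr
    exact (div_le_iff₀' hL.const_pos).2 (hL.le_mul' hy)
  · rw [ballKernel, Set.indicator_of_notMem hh]
    exact zero_le

variable [BorelSpace E] [FiniteDimensional ℝ E] [μ.IsAddHaarMeasure]
  {F G : E → ENNReal} {ε : ENNReal}

lemma mul_le_lintegral_ballKernel_mul {x w : E} {a : ENNReal} {φ : E → ENNReal} (hLx : 0 < L x)
    (hρ : 0 ≤ ρ) (hball : closedBall w (ρ * L x) ⊆ closedBall 0 (L x))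
    (ha : ∀ h ∈ closedBall w (ρ * L x), a ≤ φ h) :
    ENNReal.ofReal (ρ ^ finrank ℝ E) * a ≤ ∫⁻ h, ballKernel μ L x h * φ h ∂μ := by
  have hV₀ : μ (closedBall 0 (L x)) ≠ 0 := (measure_closedBall_pos μ _ hLx).ne'
  have hV : μ (closedBall 0 (L x)) ≠ ⊤ := measure_closedBall_lt_top.ne
  calc ENNReal.ofReal (ρ ^ finrank ℝ E) * a
      = (μ (closedBall 0 (L x)))⁻¹ * a * μ (closedBall w (ρ * L x)) := by
        rw [Measure.addHaar_closedBall_mul μ w hρ hLx.le]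
        calc _ = ENNReal.ofReal (ρ ^ finrank ℝ E) * a *
            ((μ (closedBall 0 (L x)))⁻¹ * μ (closedBall 0 (L x))) := by
              rw [ENNReal.inv_mul_cancel hV₀ hV, mul_one]
          _ = _ := by ring
    _ = ∫⁻ _ in closedBall w (ρ * L x), (μ (closedBall 0 (L x)))⁻¹ * a ∂μ :=
        (setLIntegral_const _ _).symm
    _ ≤ ∫⁻ h in closedBall w (ρ * L x), ballKernel μ L x h * φ h ∂μ := by
        refine setLIntegral_mono' measurableSet_closedBall fun h hh => ?_
        rw [ballKernel, Set.indicator_of_mem (hball hh)]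
        gcongr
        exact ha h hh
    _ ≤ ∫⁻ h, ballKernel μ L x h * φ h ∂μ := setLIntegral_le_lintegral _ _

/-- Tonelli and translation by `t • h`: each point `y` is reached only from points `x` at distance
at most `B * L y`, whose kernel is at most the one of radius `L y / B`. -/
lemma lintegral_lintegral_ballKernel_mul_le (hL : IsSlowlyVarying B L)
    (hG : Measurable G) (ht : |t| ≤ 1) :
    ∫⁻ x, ∫⁻ h, ballKernel μ L x h * G (x + t • h) ∂μ ∂μ ≤
      ENNReal.ofReal ((B ^ 2) ^ finrank ℝ E) * ∫⁻ x, G x ∂μ := by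
  calc ∫⁻ x, ∫⁻ h, ballKernel μ L x h * G (x + t • h) ∂μ ∂μ
      = ∫⁻ h, ∫⁻ x, ballKernel μ L x h * G (x + t • h) ∂μ ∂μ :=
        lintegral_lintegral_swap
          ((measurable_ballKernel hL.measurable (by fun_prop) (by fun_prop)).mul
            (hG.comp (by fun_prop))).aemeasurable
    _ = ∫⁻ h, ∫⁻ y, ballKernel μ L (y - t • h) h * G y ∂μ ∂μ := by
        refine lintegral_congr fun h => ?_
        rw [← lintegral_sub_right_eq_self _ (t • h)]
        simp only [sub_add_cancel]
    _ = ∫⁻ y, ∫⁻ h, ballKernel μ L (y - t • h) h * G y ∂μ ∂μ :=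
        lintegral_lintegral_swap
          ((measurable_ballKernel hL.measurable (by fun_prop) (by fun_prop)).mul
            (hG.comp measurable_snd)).aemeasurable
    _ ≤ ∫⁻ y, ENNReal.ofReal ((B ^ 2) ^ finrank ℝ E) * G y ∂μ := by
        gcongr with y
        have hB := hL.const_pos
        have hy : 0 < L y / B := div_pos (hL.pos y) hB
        have hV₀ : μ (closedBall 0 (L y / B)) ≠ 0 := (measure_closedBall_pos μ _ hy).ne'
        have hV : μ (closedBall 0 (L y / B)) ≠ ⊤ := measure_closedBall_lt_top.ne
        rw [lintegral_mul_const _ (measurable_ballKernel hL.measurable (by fun_prop) (by fun_prop))]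
        gcongr
        refine (lintegral_mono fun h => ballKernel_sub_smul_le hL ht).trans_eq ?_
        rw [lintegral_indicator_const measurableSet_closedBall,
          show B * L y = B ^ 2 * (L y / B) by field_simp,
          Measure.addHaar_closedBall_mul μ 0 (sq_nonneg B) hy.le, mul_left_comm,
          ENNReal.inv_mul_cancel hV₀ hV, mul_one]
    _ = ENNReal.ofReal ((B ^ 2) ^ finrank ℝ E) * ∫⁻ x, G x ∂μ := lintegral_const_mul _ hG

lemma lintegral_lintegral_ballKernel_mul_lintegral_le (hL : IsSlowlyVarying B L)
    (hG : Measurable G) :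
    ∫⁻ x, ∫⁻ h, ballKernel μ L x h * (∫⁻ t in Set.Icc (0 : ℝ) 1, G (x + t • h)) ∂μ ∂μ ≤
      ENNReal.ofReal ((B ^ 2) ^ finrank ℝ E) * ∫⁻ x, G x ∂μ := by
  calc ∫⁻ x, ∫⁻ h, ballKernel μ L x h * (∫⁻ t in Set.Icc (0 : ℝ) 1, G (x + t • h)) ∂μ ∂μ
      = ∫⁻ x, ∫⁻ h, (∫⁻ t in Set.Icc (0 : ℝ) 1, ballKernel μ L x h * G (x + t • h)) ∂μ ∂μ := by
        congr! 4 with x h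
        exact (lintegral_const_mul _ (hG.comp (by fun_prop))).symm
    _ = ∫⁻ x, (∫⁻ t in Set.Icc (0 : ℝ) 1, ∫⁻ h, ballKernel μ L x h * G (x + t • h) ∂μ) ∂μ := by
        congr! 2 with x
        exact lintegral_lintegral_swap
          ((measurable_ballKernel hL.measurable (by fun_prop) (by fun_prop)).mul
            (hG.comp (by fun_prop))).aemeasurable
    _ = ∫⁻ t in Set.Icc (0 : ℝ) 1, ∫⁻ x, ∫⁻ h, ballKernel μ L x h * G (x + t • h) ∂μ ∂μ :=
        lintegral_lintegral_swap (Measurable.lintegral_prod_right'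
          (f := fun xth : (E × ℝ) × E => ballKernel μ L xth.1.1 xth.2 *
            G (xth.1.1 + xth.1.2 • xth.2))
          ((measurable_ballKernel hL.measurable (by fun_prop) (by fun_prop)).mul
            (hG.comp (by fun_prop)))).aemeasurable
    _ ≤ ∫⁻ _ in Set.Icc (0 : ℝ) 1, ENNReal.ofReal ((B ^ 2) ^ finrank ℝ E) * ∫⁻ x, G x ∂μ :=
        setLIntegral_mono' measurableSet_Icc fun t ht => lintegral_lintegral_ballKernel_mul_le hL
          hG (abs_le.2 ⟨by linarith [ht.1], ht.2⟩)
    _ = ENNReal.ofReal ((B ^ 2) ^ finrank ℝ E) * ∫⁻ x, G x ∂μ := by simp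

lemma pow_mul_lintegral_le_of_forall_exists_closedBall (hL : IsSlowlyVarying B L)
    (hF : Measurable F) (hG : Measurable G) (hρ : 0 ≤ ρ)
    (hFG : ∀ x, F x ≠ 0 → ∃ w, closedBall w (ρ * L x) ⊆ closedBall 0 (L x) ∧
      ∀ h ∈ closedBall w (ρ * L x),
        F x ≤ ε * F (x + h) + ∫⁻ t in Set.Icc (0 : ℝ) 1, G (x + t • h)) :
    ENNReal.ofReal (ρ ^ finrank ℝ E) * ∫⁻ x, F x ∂μ ≤
      ENNReal.ofReal ((B ^ 2) ^ finrank ℝ E) * (ε * ∫⁻ x, F x ∂μ + ∫⁻ x, G x ∂μ) := by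
  have hpoint (x : E) : ENNReal.ofReal (ρ ^ finrank ℝ E) * F x ≤
      ∫⁻ h, ballKernel μ L x h *
        (ε * F (x + h) + ∫⁻ t in Set.Icc (0 : ℝ) 1, G (x + t • h)) ∂μ := by
    by_cases hFx : F x = 0
    · simp [hFx]
    · obtain ⟨w, hw, hbound⟩ := hFG x hFx
      exact mul_le_lintegral_ballKernel_mul (hL.pos x) hρ hw hbound
  have hKF (x : E) : Measurable fun h => ballKernel μ L x h * F (x + h) :=
    (measurable_ballKernel hL.measurable (by fun_prop) (by fun_prop)).mul
      (hF.comp (measurable_const_add x))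
  have hFavg : ∫⁻ x, ∫⁻ h, ballKernel μ L x h * F (x + h) ∂μ ∂μ ≤
      ENNReal.ofReal ((B ^ 2) ^ finrank ℝ E) * ∫⁻ x, F x ∂μ := by
    simpa only [one_smul] using
      lintegral_lintegral_ballKernel_mul_le (t := 1) hL hF (by simp)
  have hGavg := lintegral_lintegral_ballKernel_mul_lintegral_le (μ := μ) hL hG
  calc ENNReal.ofReal (ρ ^ finrank ℝ E) * ∫⁻ x, F x ∂μ
      = ∫⁻ x, ENNReal.ofReal (ρ ^ finrank ℝ E) * F x ∂μ := (lintegral_const_mul _ hF).symm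
    _ ≤ ∫⁻ x, (ε * (∫⁻ h, ballKernel μ L x h * F (x + h) ∂μ) +
          ∫⁻ h, ballKernel μ L x h * (∫⁻ t in Set.Icc (0 : ℝ) 1, G (x + t • h)) ∂μ) ∂μ := by
        gcongr with x
        refine (hpoint x).trans_eq ?_
        rw [← lintegral_const_mul _ (hKF x), ← lintegral_add_left ((hKF x).const_mul ε)]
        congr! 2 with h
        ring
    _ = ε * (∫⁻ x, ∫⁻ h, ballKernel μ L x h * F (x + h) ∂μ ∂μ) +
          ∫⁻ x, ∫⁻ h, ballKernel μ L x h * (∫⁻ t in Set.Icc (0 : ℝ) 1, G (x + t • h)) ∂μ ∂μ := by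
        have hKF₂ : Measurable fun x => ∫⁻ h, ballKernel μ L x h * F (x + h) ∂μ :=
          Measurable.lintegral_prod_right' (f := fun xh : E × E =>
            ballKernel μ L xh.1 xh.2 * F (xh.1 + xh.2))
            ((measurable_ballKernel hL.measurable (by fun_prop) (by fun_prop)).mul
              (hF.comp (by fun_prop)))
        rw [lintegral_add_left (hKF₂.const_mul ε), lintegral_const_mul _ hKF₂]
    _ ≤ _ := by
        rw [mul_add, mul_left_comm]
        gcongr

lemma lintegral_le_of_forall_exists_closedBall {ε : ℝ} (hL : IsSlowlyVarying B L)
    (hF : Measurable F) (hG : Measurable G) (hF_top : ∫⁻ x, F x ∂μ ≠ ⊤) (hρ : 0 < ρ) (hε : 0 ≤ ε)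
    (hBε : 2 * ((B ^ 2) ^ finrank ℝ E * ε) ≤ ρ ^ finrank ℝ E)
    (hFG : ∀ x, F x ≠ 0 → ∃ w, closedBall w (ρ * L x) ⊆ closedBall 0 (L x) ∧
      ∀ h ∈ closedBall w (ρ * L x),
        F x ≤ ENNReal.ofReal ε * F (x + h) + ∫⁻ t in Set.Icc (0 : ℝ) 1, G (x + t • h)) :
    ∫⁻ x, F x ∂μ ≤
      ENNReal.ofReal (2 * (B ^ 2) ^ finrank ℝ E / ρ ^ finrank ℝ E) * ∫⁻ x, G x ∂μ := by
  have hmain := pow_mul_lintegral_le_of_forall_exists_closedBall (μ := μ) hL hF hG hρ.le hFG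
  set β := (B ^ 2) ^ finrank ℝ E
  have hB := hL.const_pos
  by_cases hG_top : ∫⁻ x, G x ∂μ = ⊤
  · rw [hG_top, ENNReal.mul_top (ENNReal.ofReal_pos.2 (by positivity)).ne']
    exact le_top
  rw [← ENNReal.ofReal_toReal hF_top, ← ENNReal.ofReal_toReal hG_top] at hmain ⊢
  set X := (∫⁻ x, F x ∂μ).toReal
  set Y := (∫⁻ x, G x ∂μ).toReal
  have hX : 0 ≤ X := ENNReal.toReal_nonneg
  have hY : 0 ≤ Y := ENNReal.toReal_nonneg
  rw [← ENNReal.ofReal_mul (by positivity), ← ENNReal.ofReal_mul hε,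
    ← ENNReal.ofReal_add (by positivity) hY, ← ENNReal.ofReal_mul (by positivity),
    ENNReal.ofReal_le_ofReal_iff (by positivity)] at hmain
  rw [← ENNReal.ofReal_mul (by positivity)]
  refine ENNReal.ofReal_le_ofReal ?_
  rw [div_mul_eq_mul_div, le_div_iff₀' (by positivity)]
  linear_combination 2 * hmain + X * hBε

end BallKernel

section Ray

lemma sq_le_two_mul_sq_add_integral_deriv_sq {φ φ' : ℝ → ℝ} (hφ : ∀ t, HasDerivAt φ (φ' t) t)
    (hφ' : Continuous φ') : φ 0 ^ 2 ≤ 2 * φ 1 ^ 2 + 2 * ∫ t in (0 : ℝ)..1, φ' t ^ 2 := by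
  set c := φ 1 - φ 0
  have hint : ∫ t in (0 : ℝ)..1, φ' t = c :=
    intervalIntegral.integral_eq_sub_of_hasDerivAt (fun t _ => hφ t) (hφ'.intervalIntegrable _ _)
  have hvar : 0 ≤ ∫ t in (0 : ℝ)..1, (φ' t - c) ^ 2 :=
    intervalIntegral.integral_nonneg zero_le_one fun t _ => sq_nonneg _
  have hexpand : ∫ t in (0 : ℝ)..1, (φ' t - c) ^ 2 =
      (∫ t in (0 : ℝ)..1, φ' t ^ 2) - 2 * c * (∫ t in (0 : ℝ)..1, φ' t) + c ^ 2 := by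
    simp only [sub_sq', mul_right_comm _ _ c]
    rw [intervalIntegral.integral_sub, intervalIntegral.integral_add,
      intervalIntegral.integral_const_mul]
    · simp only [intervalIntegral.integral_const, sub_zero, smul_eq_mul, one_mul]
      ring
    all_goals exact Continuous.intervalIntegrable (by fun_prop) _ _
  rw [hexpand, hint] at hvar
  linear_combination 2 * hvar + sq_nonneg (φ 1 + c)

variable {E : Type*} [NormedAddCommGroup E] [InnerProductSpace ℝ E] [CompleteSpace E]
  {p u : E → ℝ} {τ κ Λ : ℝ} {x h : E}

/-- The Witten gradient `∇u + τ u ∇p = e^{-τp} ∇(e^{τp} u)`. -/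
def wittenGrad (p : E → ℝ) (τ : ℝ) (u : E → ℝ) (x : E) : E :=
  gradient u x + (τ * u x) • gradient p x

lemma continuous_gradient (hu : ContDiff ℝ 1 u) : Continuous (gradient u) :=
  (InnerProductSpace.toDual ℝ E).symm.continuous.comp (hu.continuous_fderiv one_ne_zero)

lemma continuous_wittenGrad (hp : ContDiff ℝ 1 p) (hu : ContDiff ℝ 1 u) :
    Continuous (wittenGrad p τ u) :=
  (continuous_gradient hu).add
    ((continuous_const.mul hu.continuous).smul (continuous_gradient hp))

lemma hasDerivAt_exp_mul_comp_add_smul (hp : Differentiable ℝ p) (hu : Differentiable ℝ u)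
    (t : ℝ) :
    HasDerivAt (fun t => Real.exp (τ * (p (x + t • h) - p x)) * u (x + t • h))
      (Real.exp (τ * (p (x + t • h) - p x)) * inner ℝ (wittenGrad p τ u (x + t • h)) h) t := by
  have hray : HasDerivAt (fun t : ℝ => x + t • h) h t := by
    simpa using ((hasDerivAt_id t).smul_const h).const_add x
  have hcomp {f : E → ℝ} (hf : Differentiable ℝ f) :
      HasDerivAt (fun t => f (x + t • h)) (inner ℝ (gradient f (x + t • h)) h) t := by
    rw [inner_gradient_left]
    exact (hf _).hasFDerivAt.comp_hasDerivAt t hray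
  refine (((((hcomp hp).sub_const (p x)).const_mul τ).exp).mul (hcomp hu)).congr_deriv ?_
  rw [wittenGrad, inner_add_left, real_inner_smul_left]
  ring

lemma sq_le_exp_mul_sq_add_integral_wittenGrad (hp : ContDiff ℝ 1 p) (hu : ContDiff ℝ 1 u)
    (hΛ : ∀ t ∈ Set.Icc (0 : ℝ) 1, τ * (p (x + t • h) - p x) ≤ Λ)
    (hκ : τ * (p (x + h) - p x) ≤ -κ) :
    u x ^ 2 ≤ 2 * Real.exp (-2 * κ) * u (x + h) ^ 2 +
      2 * Real.exp (2 * Λ) * ‖h‖ ^ 2 *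
        ∫ t in (0 : ℝ)..1, ‖wittenGrad p τ u (x + t • h)‖ ^ 2 := by
  have hX : Continuous fun t : ℝ => wittenGrad p τ u (x + t • h) :=
    (continuous_wittenGrad hp hu).comp (by fun_prop)
  have hpcont := hp.continuous
  have hftc := sq_le_two_mul_sq_add_integral_deriv_sq (hasDerivAt_exp_mul_comp_add_smul
    (τ := τ) (x := x) (h := h) (hp.differentiable one_ne_zero) (hu.differentiable one_ne_zero))
    (by fun_prop)
  simp only [zero_smul, add_zero, sub_self, mul_zero, Real.exp_zero, one_mul, one_smul, mul_pow,
    ← Real.exp_nat_mul, Nat.cast_ofNat] at hftc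
  have hend : Real.exp (2 * (τ * (p (x + h) - p x))) ≤ Real.exp (-2 * κ) :=
    Real.exp_le_exp.2 (by linarith)
  have hmono : ∫ t in (0 : ℝ)..1, Real.exp (2 * (τ * (p (x + t • h) - p x))) *
        inner ℝ (wittenGrad p τ u (x + t • h)) h ^ 2 ≤
      Real.exp (2 * Λ) * ‖h‖ ^ 2 * ∫ t in (0 : ℝ)..1, ‖wittenGrad p τ u (x + t • h)‖ ^ 2 := by
    rw [← intervalIntegral.integral_const_mul]
    refine intervalIntegral.integral_mono_on zero_le_one
      (Continuous.intervalIntegrable (by fun_prop) _ _)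
      (Continuous.intervalIntegrable (by fun_prop) _ _) fun t ht => ?_
    rw [mul_assoc, ← mul_pow, mul_comm ‖h‖, ← sq_abs (inner ℝ _ h)]
    gcongr
    · exact hΛ t ht
    · exact abs_real_inner_le_norm _ _
  linarith [mul_le_mul_of_nonneg_right hend (sq_nonneg (u (x + h)))]

lemma ofReal_sq_div_le_of_mul_sub_le {a b B : ℝ} (hp : ContDiff ℝ 1 p) (hu : ContDiff ℝ 1 u)
    (hΛ : ∀ t ∈ Set.Icc (0 : ℝ) 1, τ * (p (x + t • h) - p x) ≤ Λ)
    (hκ : τ * (p (x + h) - p x) ≤ -κ) (ha : 0 < a) (hb : 0 < b) (hab : b ≤ B * a) (hh : ‖h‖ ≤ a) :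
    ENNReal.ofReal ((u x / a) ^ 2) ≤
      ENNReal.ofReal (2 * Real.exp (-2 * κ) * B ^ 2) * ENNReal.ofReal ((u (x + h) / b) ^ 2) +
        ∫⁻ t in Set.Icc (0 : ℝ) 1,
          ENNReal.ofReal (2 * Real.exp (2 * Λ) * ‖wittenGrad p τ u (x + t • h)‖ ^ 2) := by
  have hX : Continuous fun t : ℝ => wittenGrad p τ u (x + t • h) :=
    (continuous_wittenGrad hp hu).comp (by fun_prop)
  set I := ∫ t in (0 : ℝ)..1, ‖wittenGrad p τ u (x + t • h)‖ ^ 2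
  have hI : 0 ≤ I := intervalIntegral.integral_nonneg zero_le_one fun t _ => by positivity
  have hlint : ∫⁻ t in Set.Icc (0 : ℝ) 1,
        ENNReal.ofReal (2 * Real.exp (2 * Λ) * ‖wittenGrad p τ u (x + t • h)‖ ^ 2) =
      ENNReal.ofReal (2 * Real.exp (2 * Λ) * I) := by
    rw [← intervalIntegral.integral_const_mul, intervalIntegral.integral_of_le zero_le_one,
      ← integral_Icc_eq_integral_Ioc]
    exact (ofReal_integral_eq_lintegral_ofReal
      (Continuous.continuousOn (by fun_prop)).integrableOn_Icc
      (Eventually.of_forall fun t => by positivity)).symm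
  rw [hlint, ← ENNReal.ofReal_mul (by positivity),
    ← ENNReal.ofReal_add (by positivity) (by positivity)]
  refine ENNReal.ofReal_le_ofReal ?_
  have hbB : (u (x + h)) ^ 2 ≤ B ^ 2 * (u (x + h) / b) ^ 2 * a ^ 2 := by
    calc u (x + h) ^ 2 = b ^ 2 * (u (x + h) / b) ^ 2 := by rw [← mul_pow, mul_div_cancel₀ _ hb.ne']
      _ ≤ (B * a) ^ 2 * (u (x + h) / b) ^ 2 := by gcongr
      _ = B ^ 2 * (u (x + h) / b) ^ 2 * a ^ 2 := by ring
  rw [div_pow, div_le_iff₀ (by positivity)]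
  calc u x ^ 2
      ≤ 2 * Real.exp (-2 * κ) * u (x + h) ^ 2 + 2 * Real.exp (2 * Λ) * ‖h‖ ^ 2 * I :=
        sq_le_exp_mul_sq_add_integral_wittenGrad hp hu hΛ hκ
    _ ≤ 2 * Real.exp (-2 * κ) * (B ^ 2 * (u (x + h) / b) ^ 2 * a ^ 2) +
          2 * Real.exp (2 * Λ) * a ^ 2 * I := by gcongr
    _ = _ := by ring

end Ray

section Weighted

open Module

variable {E : Type*} [NormedAddCommGroup E] [InnerProductSpace ℝ E] [FiniteDimensional ℝ E]
  [MeasurableSpace E] [BorelSpace E] {μ : Measure E} [μ.IsAddHaarMeasure] {p u L : E → ℝ}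
  {τ κ Λ B ρ : ℝ}

lemma lintegral_sq_div_le_of_forall_exists_closedBall (hp : ContDiff ℝ 1 p) (hu : ContDiff ℝ 1 u)
    (hτ : 0 ≤ τ) (hL : IsSlowlyVarying B L)
    (hu_top : ∫⁻ x, ENNReal.ofReal ((u x / L x) ^ 2) ∂μ ≠ ⊤) (hρ : 0 < ρ)
    (hκ : 2 * ((B ^ 2) ^ finrank ℝ E * (2 * Real.exp (-2 * κ) * B ^ 2)) ≤ ρ ^ finrank ℝ E)
    (hosc : ∀ x, u x ≠ 0 → τ * ballOsc p x (L x) ≤ Λ)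
    (hdrop : ∀ x, u x ≠ 0 → ∃ w, closedBall w (ρ * L x) ⊆ closedBall x (L x) ∧
      ∀ z ∈ closedBall w (ρ * L x), τ * (p z - p x) ≤ -κ) :
    ∫⁻ x, ENNReal.ofReal ((u x / L x) ^ 2) ∂μ ≤
      ENNReal.ofReal (2 * (B ^ 2) ^ finrank ℝ E / ρ ^ finrank ℝ E * (2 * Real.exp (2 * Λ))) *
        ∫⁻ x, ENNReal.ofReal (‖wittenGrad p τ u x‖ ^ 2) ∂μ := by
  have := FiniteDimensional.proper_real E
  have hX := continuous_wittenGrad (τ := τ) hp hu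
  have hLm := hL.measurable
  have hum := hu.continuous.measurable
  have hB := hL.const_pos
  rw [ENNReal.ofReal_mul (by positivity), mul_assoc, ← lintegral_const_mul _ (by fun_prop)]
  simp only [← ENNReal.ofReal_mul (show 0 ≤ 2 * Real.exp (2 * Λ) by positivity)]
  refine lintegral_le_of_forall_exists_closedBall hL (by fun_prop) (by fun_prop) hu_top hρ
    (by positivity) hκ fun x hx => ?_
  have hux : u x ≠ 0 := fun h => hx (by simp [h])
  obtain ⟨w, hw, hwdrop⟩ := hdrop x hux
  have hshift {h : E} (hh : h ∈ closedBall (w - x) (ρ * L x)) :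
      x + h ∈ closedBall w (ρ * L x) := by
    rwa [mem_closedBall_iff_norm, show x + h - w = h - (w - x) by abel, ← mem_closedBall_iff_norm]
  have hnorm {h : E} (hh : h ∈ closedBall (w - x) (ρ * L x)) : ‖h‖ ≤ L x := by
    simpa [mem_closedBall_iff_norm] using hw (hshift hh)
  refine ⟨w - x, fun h hh => mem_closedBall_zero_iff.2 (hnorm hh), fun h hh => ?_⟩
  refine ofReal_sq_div_le_of_mul_sub_le hp hu (fun t ht => ?_) (hwdrop _ (hshift hh)) (hL.pos x)
    (hL.pos _) (hL.le_mul' (hw (hshift hh))) (hnorm hh)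
  have ht' : x + t • h ∈ closedBall x (L x) := by
    rw [mem_closedBall_iff_norm, add_sub_cancel_left, norm_smul, Real.norm_of_nonneg ht.1]
    exact (mul_le_of_le_one_left (norm_nonneg h) ht.2).trans (hnorm hh)
  refine le_trans ?_ (hosc x hux)
  gcongr
  exact (le_abs_self _).trans (abs_sub_le_ballOsc hp.continuous ht')

end Weighted

section Integrals

variable {E : Type*} [NormedAddCommGroup E] [InnerProductSpace ℝ E] [CompleteSpace E]
  {p u : E → ℝ} {τ : ℝ} {x : E}

lemma gradient_eq_zero_of_notMem_tsupport (hx : x ∉ tsupport u) : gradient u x = 0 := by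
  rw [gradient, fderiv_of_notMem_tsupport ℝ hx, map_zero]

lemma norm_gradient_sq_le :
    ‖gradient u x‖ ^ 2 ≤
      2 * ‖wittenGrad p τ u x‖ ^ 2 + 2 * (τ ^ 2 * (‖gradient p x‖ ^ 2 * u x ^ 2)) := by
  have hsub : ‖gradient u x‖ ≤ ‖wittenGrad p τ u x‖ + ‖(τ * u x) • gradient p x‖ := by
    simpa [wittenGrad] using norm_sub_le (wittenGrad p τ u x) ((τ * u x) • gradient p x)
  calc ‖gradient u x‖ ^ 2 ≤ (‖wittenGrad p τ u x‖ + ‖(τ * u x) • gradient p x‖) ^ 2 := by gcongr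
    _ ≤ 2 * (‖wittenGrad p τ u x‖ ^ 2 + ‖(τ * u x) • gradient p x‖ ^ 2) := add_sq_le
    _ = _ := by
        rw [norm_smul, mul_pow, Real.norm_eq_abs, sq_abs]
        ring

variable [MeasurableSpace E] [OpensMeasurableSpace E] {μ : Measure E}
  [IsFiniteMeasureOnCompacts μ]

lemma integrable_norm_gradient_sq (hu : ContDiff ℝ 1 u) (hsupp : HasCompactSupport u) :
    Integrable (fun x => ‖gradient u x‖ ^ 2) μ :=
  ((continuous_gradient hu).norm.pow 2).integrable_of_hasCompactSupport
    (HasCompactSupport.intro hsupp fun x hx => by simp [gradient_eq_zero_of_notMem_tsupport hx])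

lemma integrable_norm_gradient_sq_mul_sq (hp : ContDiff ℝ 1 p) (hu : Continuous u)
    (hsupp : HasCompactSupport u) : Integrable (fun x => ‖gradient p x‖ ^ 2 * u x ^ 2) μ :=
  (((continuous_gradient hp).norm.pow 2).mul (hu.pow 2)).integrable_of_hasCompactSupport
    (HasCompactSupport.intro hsupp fun x hx => by simp [image_eq_zero_of_notMem_tsupport hx])

lemma integrable_norm_wittenGrad_sq (hp : ContDiff ℝ 1 p) (hu : ContDiff ℝ 1 u)
    (hsupp : HasCompactSupport u) : Integrable (fun x => ‖wittenGrad p τ u x‖ ^ 2) μ :=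
  ((continuous_wittenGrad hp hu).norm.pow 2).integrable_of_hasCompactSupport
    (HasCompactSupport.intro hsupp fun x hx => by
      simp [wittenGrad, gradient_eq_zero_of_notMem_tsupport hx,
        image_eq_zero_of_notMem_tsupport hx])

lemma integral_norm_gradient_sq_le (hp : ContDiff ℝ 1 p) (hu : ContDiff ℝ 1 u)
    (hsupp : HasCompactSupport u) :
    ∫ x, ‖gradient u x‖ ^ 2 ∂μ ≤
      2 * (∫ x, ‖wittenGrad p τ u x‖ ^ 2 ∂μ) +
        2 * (τ ^ 2 * ∫ x, ‖gradient p x‖ ^ 2 * u x ^ 2 ∂μ) := by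
  have hX := integrable_norm_wittenGrad_sq (τ := τ) (μ := μ) hp hu hsupp
  have hpu := integrable_norm_gradient_sq_mul_sq (μ := μ) hp hu.continuous hsupp
  simp only [← integral_const_mul]
  rw [← integral_add (hX.const_mul 2) ((hpu.const_mul _).const_mul 2)]
  exact integral_mono (integrable_norm_gradient_sq hu hsupp)
    ((hX.const_mul 2).add ((hpu.const_mul _).const_mul 2)) fun x => norm_gradient_sq_le

variable (μ) in
lemma exists_integral_norm_gradient_sq_mul_sq_le {K : Set E} (hp : ContDiff ℝ 1 p)
    (hK : IsCompact K) :
    ∃ M ≥ 0, ∀ u : E → ℝ, Continuous u → tsupport u ⊆ K →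
      ∫ x, ‖gradient p x‖ ^ 2 * u x ^ 2 ∂μ ≤ M * ∫ x, u x ^ 2 ∂μ := by
  obtain ⟨D, hD⟩ := hK.exists_bound_of_continuousOn (continuous_gradient hp).continuousOn
  refine ⟨D ^ 2, sq_nonneg D, fun u hu hsuppK => ?_⟩
  have hsupp : HasCompactSupport u := hK.of_isClosed_subset (isClosed_tsupport u) hsuppK
  have hu2 : Integrable (fun x => u x ^ 2) μ :=
    (hu.pow 2).integrable_of_hasCompactSupport
      (HasCompactSupport.intro hsupp fun x hx => by simp [image_eq_zero_of_notMem_tsupport hx])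
  rw [← integral_const_mul]
  refine integral_mono (integrable_norm_gradient_sq_mul_sq hp hu hsupp) (hu2.const_mul _)
    fun x => ?_
  rcases eq_or_ne (u x) 0 with hx | hx
  · simp [hx]
  · have hDx := hD x (hsuppK (subset_tsupport u hx))
    dsimp only
    gcongr

end Integrals

section MaximalEstimate

lemma exists_two_le_mul_pow_mul_exp_le (k : ℕ) (a : ℝ) {b δ : ℝ} (hb : 0 < b) (hδ : 0 < δ) :
    ∃ R ≥ 2, a * R ^ k * Real.exp (-b * R) ≤ δ := by
  have hlim := (tendsto_rpow_mul_exp_neg_mul_atTop_nhds_zero k b hb).const_mul a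
  rw [mul_zero] at hlim
  obtain ⟨R, hδR, hR⟩ := ((hlim.eventually_le_const hδ).and (eventually_ge_atTop 2)).exists
  exact ⟨R, hR, by simpa only [Real.rpow_natCast, mul_assoc] using hδR⟩

lemma IsBernstein.isSlowlyVarying_mul_oscScale {E : Type*} [NormedAddCommGroup E]
    [NormedSpace ℝ E] [ProperSpace E] [MeasurableSpace E] [BorelSpace E] {N : ℕ} {p : E → ℝ}
    {τ R : ℝ} (hp : IsBernstein N p) (hne : ∃ a b, p a ≠ p b) (hτ : 0 < τ) (hR : 1 ≤ R) :
    IsSlowlyVarying ((8 * R) ^ (N + 1)) fun x => R * oscScale p τ x where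
  measurable := (hp.measurable_oscScale hne hτ).const_mul R
  pos _ := mul_pos (by positivity) (hp.oscScale_pos hne hτ)
  le_mul {x y} hy := by
    have hy₀ := hp.oscScale_pos (x := y) hne hτ
    calc R * oscScale p τ x ≤ R * ((8 * R) ^ N * oscScale p τ y) := by
          gcongr
          exact hp.oscScale_le_mul_of_mem_closedBall hne hτ hR hy
      _ = (8 * R) ^ N * (R * oscScale p τ y) := by ring
      _ ≤ (8 * R) ^ (N + 1) * (R * oscScale p τ y) := by
          gcongr
          · linarith
          · exact N.le_succ
  le_mul' {x y} hy := by
    have hx₀ := hp.oscScale_pos (x := x) hne hτ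
    calc R * oscScale p τ y ≤ R * (3 * R * 2 ^ N * oscScale p τ x) := by
          gcongr
          exact hp.oscScale_le_mul_of_mem_closedBall' hne hτ hR hy
      _ = 3 * R * 2 ^ N * (R * oscScale p τ x) := by ring
      _ ≤ 8 * R * (8 * R) ^ N * (R * oscScale p τ x) := by
          gcongr <;> linarith
      _ = (8 * R) ^ (N + 1) * (R * oscScale p τ x) := by rw [pow_succ']

lemma IsBernstein.lintegral_sq_div_oscScale_ne_top {E : Type*} [NormedAddCommGroup E]
    [NormedSpace ℝ E] [ProperSpace E] [MeasurableSpace E] [BorelSpace E] {μ : Measure E}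
    [IsFiniteMeasureOnCompacts μ] {N : ℕ} {p u : E → ℝ} {τ R : ℝ} (hp : IsBernstein N p)
    (hne : ∃ a b, p a ≠ p b) (hτ : 0 < τ) (hR : 0 < R) (hu : Continuous u)
    (hsupp : HasCompactSupport u) :
    ∫⁻ x, ENNReal.ofReal ((u x / (R * oscScale p τ x)) ^ 2) ∂μ ≠ ⊤ := by
  obtain ⟨D, hD⟩ := hsupp.isBounded.subset_closedBall 0
  obtain ⟨δ, hδ, hℓ⟩ := hp.exists_pos_le_oscScale hne hτ 0 D
  have hint : Integrable (fun x => (u x / (R * δ)) ^ 2) μ :=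
    Continuous.integrable_of_hasCompactSupport (by fun_prop)
      (hsupp.comp_left (g := fun y => (y / (R * δ)) ^ 2) (by simp))
  refine ((lintegral_mono fun x => ENNReal.ofReal_le_ofReal ?_).trans_lt
    hint.lintegral_lt_top).ne
  rcases eq_or_ne (u x) 0 with hx | hx
  · simp [hx]
  · have hδℓ := hℓ x (hD (subset_tsupport u hx))
    rw [div_pow, div_pow]
    gcongr

variable {n N : ℕ} {p : En n → ℝ} {C : ℝ} {K U : Set (En n)}

lemma IsBernstein.exists_forall_closedBall_mul_sub_le (n N : ℕ) (hC : 0 ≤ C) :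
    ∃ c > 0, ∃ ρ > 0, ∀ {p : En n → ℝ}, IsBernstein N p → ContDiff ℝ 2 p → (∃ a b, p a ≠ p b) →
      ∀ {τ R : ℝ} {x : En n}, 0 < τ → 2 ≤ R → 2 * C * (2 * R) ^ N ≤ τ →
      (∀ z ∈ closedBall x (R * oscScale p τ x), SpectralBoundAt C p z) →
      ∃ w, closedBall w (ρ * (R * oscScale p τ x)) ⊆ closedBall x (R * oscScale p τ x) ∧
        ∀ z ∈ closedBall w (ρ * (R * oscScale p τ x)), τ * (p z - p x) ≤ -(c * R) := by
  obtain ⟨c, hc, ρ, hρ, hdescent⟩ := exists_forall_closedBall_le_sub_mul_ballOsc n N hC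
  refine ⟨c / 2 ^ N, by positivity, ρ, hρ, fun {p} hp hp2 hne {τ R x} hτ hR hCτ hspec => ?_⟩
  set s := R * oscScale p τ x
  have hs : 0 < s := mul_pos (by linarith) (hp.oscScale_pos hne hτ)
  have hCosc : C * ballOsc p x s ≤ 1 / 2 := by
    refine le_of_mul_le_mul_left ?_ hτ
    calc τ * (C * ballOsc p x s) = C * (τ * ballOsc p x s) := by ring
      _ ≤ C * (2 * R) ^ N := by
          gcongr
          exact hp.mul_ballOsc_mul_oscScale_le hne hτ (by linarith)
      _ ≤ τ * (1 / 2) := by linarith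
  obtain ⟨w, hw, hdrop⟩ := hdescent hp hp2 hs (hp.ballOsc_pos hne hs) hCosc hspec
  refine ⟨w, hw, fun z hz => ?_⟩
  have hlow : R / 2 ^ N ≤ τ * ballOsc p x s :=
    (div_le_iff₀' (by positivity)).2 (hp.lt_mul_ballOsc_mul_oscScale hne hτ hR).le
  calc τ * (p z - p x) ≤ τ * -(c * ballOsc p x s) := by
        gcongr
        linarith [hdrop z hz]
    _ = -(c * (τ * ballOsc p x s)) := by ring
    _ ≤ -(c * (R / 2 ^ N)) := by gcongr
    _ = -(c / 2 ^ N * R) := by ring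

lemma IsBernstein.exists_lintegral_sq_div_oscScale_le (hp : IsBernstein N p)
    (hne : ∃ a b, p a ≠ p b) (hp2 : ContDiff ℝ 2 p) (hC : 0 ≤ C) (hU : IsOpen U)
    (hK : IsCompact K) (hKU : K ⊆ U) (hspec : ∀ x ∈ U, SpectralBoundAt C p x) :
    ∃ R > 0, ∃ M ≥ 0, ∃ τ₀ > 0, ∀ τ ≥ τ₀, ∀ u : En n → ℝ, ContDiff ℝ 1 u → tsupport u ⊆ K →
      ∫⁻ x, ENNReal.ofReal ((u x / (R * oscScale p τ x)) ^ 2) ≤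
        ENNReal.ofReal M * ∫⁻ x, ENNReal.ofReal (‖wittenGrad p τ u x‖ ^ 2) := by
  obtain ⟨c, hc, ρ, hρ, hdescent⟩ := exists_forall_closedBall_mul_sub_le n N hC
  set m := (N + 1) * (2 * n + 2)
  obtain ⟨R, hR, hexp⟩ :=
    exists_two_le_mul_pow_mul_exp_le m (4 * 8 ^ m) (mul_pos two_pos hc) (pow_pos hρ n)
  set B := (8 * R) ^ (N + 1)
  set Λ := (2 * R) ^ N
  -- A large `R` makes the drop `c R` of `τ p` beat the polynomial loss `B`.
  have hloss : 2 * ((B ^ 2) ^ n * (2 * Real.exp (-2 * (c * R)) * B ^ 2)) ≤ ρ ^ n := by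
    have hB : 8 ^ m * R ^ m = B ^ (2 * n + 2) := by rw [← mul_pow, pow_mul]
    rw [mul_assoc 4, hB, neg_mul, mul_assoc 2 c, ← neg_mul] at hexp
    clear_value B
    exact le_of_eq_of_le (by ring) hexp
  obtain ⟨δ, hδ, hδU⟩ := hK.exists_cthickening_subset_open hU hKU
  obtain ⟨D, hD⟩ := hK.isBounded.subset_closedBall 0
  obtain ⟨τ₁, hτ₁, hsmall⟩ := hp.exists_oscScale_le hne (δ := δ / R) (by positivity) 0 D
  refine ⟨R, by positivity, 2 * (B ^ 2) ^ n / ρ ^ n * (2 * Real.exp (2 * Λ)), by positivity,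
    max τ₁ (2 * C * Λ), lt_max_of_lt_left hτ₁, fun τ hτ u hu hsupp => ?_⟩
  have hτ₀ : 0 < τ := hτ₁.trans_le ((le_max_left _ _).trans hτ)
  have hu_top := hp.lintegral_sq_div_oscScale_ne_top (μ := volume) (R := R) hne hτ₀ (by linarith)
    hu.continuous (hK.of_isClosed_subset (isClosed_tsupport u) hsupp)
  have hest := lintegral_sq_div_le_of_forall_exists_closedBall (κ := c * R) (Λ := Λ)
    (hp2.of_le one_le_two) hu hτ₀.le (hp.isSlowlyVarying_mul_oscScale hne hτ₀ (by linarith))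
    hu_top hρ (by rwa [finrank_euclideanSpace_fin])
    (fun x _ => hp.mul_ballOsc_mul_oscScale_le hne hτ₀ (by linarith)) fun x hx =>
      hdescent hp hp2 hne hτ₀ hR ((le_max_right _ _).trans hτ) fun z hz => hspec z (hδU ?_)
  · rwa [finrank_euclideanSpace_fin] at hest
  · have hxK := hsupp (subset_tsupport u hx)
    have hxδ := hsmall τ ((le_max_left _ _).trans hτ) x (hD hxK)
    refine closedBall_subset_cthickening hxK δ (closedBall_subset_closedBall ?_ hz)
    exact (le_div_iff₀' (by linarith)).1 hxδ

lemma IsBernstein.sq_mul_norm_gradient_sq_mul_sq_le {R τ : ℝ} {u : En n → ℝ} {x : En n}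
    (hp : IsBernstein N p) (hne : ∃ a b, p a ≠ p b) (hτ : 0 < τ) (hR : 0 < R) :
    τ ^ 2 * (‖gradient p x‖ ^ 2 * u x ^ 2) ≤
      (2 ^ N * R) ^ 2 * (u x / (R * oscScale p τ x)) ^ 2 := by
  have hℓ := hp.oscScale_pos (x := x) hne hτ
  have hgrad := hp.oscScale_mul_norm_fderiv_le (x := x) hne hτ
  rw [← norm_gradient] at hgrad
  calc τ ^ 2 * (‖gradient p x‖ ^ 2 * u x ^ 2)
      = (oscScale p τ x * (τ * ‖gradient p x‖)) ^ 2 * (u x / oscScale p τ x) ^ 2 := by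
        field_simp
    _ ≤ (2 ^ N) ^ 2 * (u x / oscScale p τ x) ^ 2 := by gcongr
    _ = (2 ^ N * R) ^ 2 * (u x / (R * oscScale p τ x)) ^ 2 := by field_simp

lemma IsBernstein.exists_sq_mul_integral_le (hp : IsBernstein N p)
    (hne : ∃ a b, p a ≠ p b) (hp2 : ContDiff ℝ 2 p) (hC : 0 ≤ C) (hU : IsOpen U)
    (hK : IsCompact K) (hKU : K ⊆ U) (hspec : ∀ x ∈ U, SpectralBoundAt C p x) :
    ∃ M ≥ 0, ∃ τ₀ > 0, ∀ τ ≥ τ₀, ∀ u : En n → ℝ, ContDiff ℝ 1 u → tsupport u ⊆ K →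
      τ ^ 2 * ∫ x, ‖gradient p x‖ ^ 2 * u x ^ 2 ≤ M * ∫ x, ‖wittenGrad p τ u x‖ ^ 2 := by
  obtain ⟨R, hR, M, hM, τ₀, hτ₀, hest⟩ :=
    hp.exists_lintegral_sq_div_oscScale_le hne hp2 hC hU hK hKU hspec
  refine ⟨(2 ^ N * R) ^ 2 * M, by positivity, τ₀, hτ₀, fun τ hτ u hu hsuppK => ?_⟩
  have hp1 : ContDiff ℝ 1 p := hp2.of_le one_le_two
  have hsupp : HasCompactSupport u := hK.of_isClosed_subset (isClosed_tsupport u) hsuppK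
  rw [← integral_const_mul, ← ENNReal.ofReal_le_ofReal_iff (by positivity),
    ENNReal.ofReal_mul (by positivity), ENNReal.ofReal_mul (by positivity),
    ofReal_integral_eq_lintegral_ofReal
      ((integrable_norm_gradient_sq_mul_sq hp1 hu.continuous hsupp).const_mul _)
      (Eventually.of_forall fun x => by positivity),
    ofReal_integral_eq_lintegral_ofReal (integrable_norm_wittenGrad_sq hp1 hu hsupp)
      (Eventually.of_forall fun x => by positivity), mul_assoc]
  calc ∫⁻ x, ENNReal.ofReal (τ ^ 2 * (‖gradient p x‖ ^ 2 * u x ^ 2))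
      ≤ ∫⁻ x, ENNReal.ofReal ((2 ^ N * R) ^ 2) *
          ENNReal.ofReal ((u x / (R * oscScale p τ x)) ^ 2) := by
        refine lintegral_mono fun x => ?_
        rw [← ENNReal.ofReal_mul (by positivity)]
        exact ENNReal.ofReal_le_ofReal
          (hp.sq_mul_norm_gradient_sq_mul_sq_le hne (hτ₀.trans_le hτ) hR)
    _ = ENNReal.ofReal ((2 ^ N * R) ^ 2) *
          ∫⁻ x, ENNReal.ofReal ((u x / (R * oscScale p τ x)) ^ 2) :=
        lintegral_const_mul' _ _ ENNReal.ofReal_ne_top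
    _ ≤ _ := by
        gcongr
        exact hest τ hτ u hu hsuppK

lemma IsBernstein.exists_sq_mul_integral_le_mul_add (hp : IsBernstein N p) (hp2 : ContDiff ℝ 2 p)
    (hC : 0 ≤ C) (hU : IsOpen U) (hK : IsCompact K) (hKU : K ⊆ U)
    (hspec : ∀ x ∈ U, SpectralBoundAt C p x) :
    ∃ M ≥ 0, ∀ τ : ℝ, 0 < τ → ∀ u : En n → ℝ, ContDiff ℝ 1 u → tsupport u ⊆ K →
      τ ^ 2 * ∫ x, ‖gradient p x‖ ^ 2 * u x ^ 2 ≤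
        M * ((∫ x, ‖wittenGrad p τ u x‖ ^ 2) + ∫ x, u x ^ 2) := by
  by_cases hne : ∃ a b, p a ≠ p b
  · obtain ⟨M, hM, τ₀, hτ₀, hlarge⟩ := hp.exists_sq_mul_integral_le hne hp2 hC hU hK hKU hspec
    obtain ⟨D, hD, hsmall⟩ := exists_integral_norm_gradient_sq_mul_sq_le volume
      (hp2.of_le one_le_two) hK
    refine ⟨M + τ₀ ^ 2 * D, by positivity, fun τ hτ u hu hsuppK => ?_⟩
    have hX : 0 ≤ ∫ x, ‖wittenGrad p τ u x‖ ^ 2 := by positivity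
    have hu2 : 0 ≤ ∫ x, u x ^ 2 := by positivity
    rcases le_total τ₀ τ with hτ' | hτ'
    · calc τ ^ 2 * ∫ x, ‖gradient p x‖ ^ 2 * u x ^ 2
          ≤ M * ∫ x, ‖wittenGrad p τ u x‖ ^ 2 := hlarge τ hτ' u hu hsuppK
        _ ≤ _ := by
          gcongr
          · exact le_add_of_nonneg_right (by positivity)
          · exact le_add_of_nonneg_right hu2
    · calc τ ^ 2 * ∫ x, ‖gradient p x‖ ^ 2 * u x ^ 2
          ≤ τ₀ ^ 2 * (D * ∫ x, u x ^ 2) := by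
            gcongr
            exact hsmall u hu.continuous hsuppK
        _ = τ₀ ^ 2 * D * ∫ x, u x ^ 2 := by ring
        _ ≤ _ := by
          gcongr
          · exact le_add_of_nonneg_left hM
          · exact le_add_of_nonneg_left hX
  · push Not at hne
    have hgrad (x : En n) : gradient p x = 0 := by
      rw [funext fun y => hne y 0, gradient_fun_const]
    exact ⟨0, le_rfl, fun τ _ u _ _ => by simp [hgrad]⟩

theorem poly_local_maximal_estimate_general (hp : IsBernstein N p) (hp2 : ContDiff ℝ 2 p)
    (hC : 0 ≤ C) (hU : IsOpen U) (hK : IsCompact K) (hKU : K ⊆ U)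
    (hspec : ∀ x ∈ U, SpectralBoundAt C p x) :
    ∃ c₀ > 0, ∀ τ : ℝ, 0 < τ → ∀ u : En n → ℝ, ContDiff ℝ 1 u → tsupport u ⊆ K →
      (∫ x, ‖gradient u x‖ ^ 2) + τ ^ 2 * ∫ x, ‖gradient p x‖ ^ 2 * u x ^ 2 ≤
        c₀ * (∫ x, ‖wittenGrad p τ u x‖ ^ 2) + c₀ * ∫ x, u x ^ 2 := by
  obtain ⟨M, hM, hest⟩ := hp.exists_sq_mul_integral_le_mul_add hp2 hC hU hK hKU hspec
  refine ⟨3 * M + 2, by positivity, fun τ hτ u hu hsuppK => ?_⟩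
  have hgrad := integral_norm_gradient_sq_le (τ := τ) (μ := volume) (hp2.of_le one_le_two) hu
    (hK.of_isClosed_subset (isClosed_tsupport u) hsuppK)
  have hu2 : 0 ≤ ∫ x, u x ^ 2 := by positivity
  linarith [hest τ hτ u hu hsuppK]

end MaximalEstimate

/-- local maximal estimate for polynomials satisfying the eigenvalue
estimate near the origin. -/
theorem poly_local_maximal_estimate (n r : ℕ) (hr : 1 ≤ r)
    (p : En n → ℝ) (hp : IsPolyDeg n r p) (σ C : ℝ) (hσ : 0 < σ) (hC : 0 < C)
    (hloc : ∀ x : En n, ‖x‖ < σ →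
      lamPos n p x ≤ C * (lamNeg n p x + ‖gradient p x‖ ^ 2)) :
    ∃ σ' : ℝ, 0 < σ' ∧ σ' ≤ σ ∧ ∃ c₀ > (0 : ℝ), ∀ τ : ℝ, 0 < τ →
      ∀ u : En n → ℝ, TestFun n u → tsupport u ⊆ Metric.ball (0 : En n) σ' →
        (∫ x : En n, ‖gradient u x‖ ^ 2)
            + τ ^ 2 * ∫ x : En n, ‖gradient p x‖ ^ 2 * u x ^ 2
          ≤ c₀ * (∫ x : En n, ‖gradient u x + (τ * u x) • gradient p x‖ ^ 2)
            + c₀ * ∫ x : En n, u x ^ 2 := by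
  obtain ⟨N, hBernstein⟩ := exists_isBernstein_of_isPolyDeg n r
  obtain ⟨c₀, hc₀, hest⟩ := poly_local_maximal_estimate_general (hBernstein p hp) hp.contDiff hC.le
    isOpen_ball (isCompact_closedBall 0 (σ / 2)) (closedBall_subset_ball (half_lt_self hσ))
    fun x hx => hloc x (mem_ball_zero_iff.1 hx)
  exact ⟨σ / 2, half_pos hσ, half_le_self hσ.le, c₀, hc₀, fun τ hτ u hu hsupp =>
    hest τ hτ u (hu.1.of_le (by exact_mod_cast le_top)) (hsupp.trans ball_subset_closedBall)⟩

end
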